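/- arXiv:2106.12661 — 2 statements merged into one kernel-verified Lean document; each statement's English description precedes it below -/
import Mathlib

section
/- Let H be a real separable Hilbert space, d ≥ 1 with d < dim H, and let P_0 be a d-plane in H. For k ∈ ℕ set r_k = 10^{-k}, let {x_{j,k}}_{j∈J_k} ⊆ H satisfy |x_{i,k} − x_{j,k}| ≥ r_k for distinct i, j ∈ J_k, set B_{j,k} = B(x_{j,k}, r_k), and let P_{j,k} be a d-plane with x_{j,k} ∈ P_{j,k}. Define ε_k(x) = sup{ d_{B(x_{i,l},10^4 r_l)}(P_{j,k}, P_{i,l}) : j ∈ J_k, |l−k| ≤ 2, i ∈ J_l, x ∈ 100B_{j,k} ∩ 100B_{i,l} }. There exists ε_0 > 0 depending only on d such that if 0 < ε < ε_0 and (a) x_{j,k} ∈ ⋃_{i∈J_{k−1}} 2B_{i,k−1} for all k ≥ 1 and j ∈ J_k, (b) dist(x_{j,0}, P_0) ≤ ε for all j ∈ J_0, (c) d_{B(x_{j,0},100)}(P_{j,0}, P_0) ≤ ε for all j ∈ J_0, and (d) ε_k(x_{j,k}) < ε for all k ≥ 0 and j ∈ J_k, then there exist τ ∈ (0,1), a constant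 C depending only on d, a constant c(d) > 0, and an injective continuous map f : P_0 → H such that: (1) |f(x) − x| ≤ Cε for all x ∈ P_0; (2) (1/4)|x−y|^{1+τ} ≤ |f(x) − f(y)| ≤ 10|x−y|^{1−τ} whenever x, y ∈ P_0 and |x−y| ≤ 1; (3) E_∞ := ⋂_{K≥1} closure( ⋃_{k≥K} {x_{j,k} : j ∈ J_k} ) ⊆ Σ := f(P_0); (4) Σ is Cε-Reifenberg flat: for every z ∈ Σ and t ∈ (0,1) there is a d-plane P with d_{B(z,t)}(Σ, P) ≤ Cε; (5) 𝓗^d_∞(Σ ∩ B(x,r)) ≥ c(d) r^d for all x ∈ Σ and r > 0. -/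
open Metric Set MeasureTheory
open scoped ENNReal NNReal Classical

noncomputable section

variable {H : Type*} [NormedAddCommGroup H] [InnerProductSpace ℝ H]

/-- A `d`-plane: a `d`-dimensional affine subspace of `H`. -/
def IsDPlane (d : ℕ) (P : Set H) : Prop :=
  ∃ (x : H) (W : Submodule ℝ H), Module.finrank ℝ W = d ∧ P = (fun w => x + w) '' (W : Set H)

/-- `d`-dimensional Hausdorff content `𝓗^d_∞`. -/
def hContent (d : ℕ) (A : Set H) : ℝ≥0∞ :=
  ⨅ (t : ℕ → Set H) (_ : A ⊆ ⋃ n, t n), ∑' n, EMetric.diam (t n) ^ (d : ℝ)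

/-- Normalized local Hausdorff distance between `E` and `F` relative to the ball `B(x,r)`. -/
def dBall (x : H) (r : ℝ) (E F : Set H) : ℝ :=
  r⁻¹ * max (⨆ y ∈ E ∩ closedBall x r, infDist y F) (⨆ y ∈ F ∩ closedBall x r, infDist y E)

/-- `β_E^{d,p}(B(x,r), P)`. -/
def betaPl (d : ℕ) (p : ℝ) (E : Set H) (x : H) (r : ℝ) (P : Set H) : ℝ≥0∞ :=
  ((ENNReal.ofReal r ^ d)⁻¹ *
      ∫⁻ t in Ioo (0 : ℝ) 1,
        hContent d {y | y ∈ E ∩ closedBall x r ∧ t * r < infDist y P} *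
          ENNReal.ofReal (t ^ (p - 1))) ^ (1 / p)

/-- `β_E^{d,p}(B(x,r))`: infimum of `β_E^{d,p}(B(x,r), P)` over all `d`-planes `P`. -/
def betaInf (d : ℕ) (p : ℝ) (E : Set H) (x : H) (r : ℝ) : ℝ≥0∞ :=
  ⨅ (P : Set H) (_ : IsDPlane d P), betaPl d p E x r P

/-- Choquet integral of `f` over `A` against the Hausdorff content `𝓗^d_∞`. -/
def choquet (d : ℕ) (A : Set H) (f : H → ℝ) : ℝ≥0∞ :=
  ∫⁻ t in Ioi (0 : ℝ), hContent d {x | x ∈ A ∧ t < f x}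

/-- Choquet integral of `f^p` over `A` against the Hausdorff content `𝓗^d_∞`. -/
def choquetPow (d : ℕ) (p : ℝ) (A : Set H) (f : H → ℝ) : ℝ≥0∞ :=
  ∫⁻ t in Ioi (0 : ℝ), hContent d {x | x ∈ A ∧ t < f x} * ENNReal.ofReal (t ^ (p - 1))

/-- A Christ–David cube system for `E ⊆ H`, with parameters `c₀, ρ ∈ (0,1)`. A cube
`Q ∈ cubes k` has side length `ℓ(Q) = 5ρᵏ` and centre `center k Q`. -/
structure ChristDavid (E : Set H) where
  c₀ : ℝ
  ρ : ℝ
  c₀_pos : 0 < c₀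
  c₀_lt_one : c₀ < 1
  ρ_pos : 0 < ρ
  ρ_lt_one : ρ < 1
  cubes : ℤ → Set (Set H)
  center : ℤ → Set H → H
  subset_E : ∀ k Q, Q ∈ cubes k → Q ⊆ E
  nested : ∀ k l Q R, Q ∈ cubes k → R ∈ cubes l → (Q ∩ R).Nonempty → Q ⊆ R ∨ R ⊆ Q
  center_mem : ∀ k Q, Q ∈ cubes k → center k Q ∈ E
  ball_subset : ∀ k Q, Q ∈ cubes k →
    E ∩ closedBall (center k Q) (c₀ * (5 * ρ ^ k)) ⊆ Q
  subset_ball : ∀ k Q, Q ∈ cubes k → Q ⊆ closedBall (center k Q) (5 * ρ ^ k)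
  covers : ∀ k, E ⊆ ⋃ Q ∈ cubes k, closedBall (center k Q) (5 * ρ ^ k)

namespace ChristDavid

variable {E : Set H}

/-- Sum of a quantity over all cubes of a Christ–David cube system. -/
def sumCubes (D : ChristDavid E) (F : ℤ → Set H → ℝ≥0∞) : ℝ≥0∞ :=
  ∑' (k : ℤ), ∑' (Q : D.cubes k), F k (Q : Set H)

/-- `Q ∈ BWGL(A, ε)`: the set `E` is `ε`-far from every `d`-plane in `A B_Q`. -/
def inBWGL (D : ChristDavid E) (d : ℕ) (A ε : ℝ) (k : ℤ) (Q : Set H) : Prop :=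
  ∀ P : Set H, IsDPlane d P → ε ≤ dBall (D.center k Q) (A * (5 * D.ρ ^ k)) E P

/-- `BWGL(Q₀, A, ε) = Σ { ℓ(R)^d : R ⊆ Q₀, R ∈ BWGL(A,ε) }`. -/
def bwglSum (D : ChristDavid E) (d : ℕ) (A ε : ℝ) (Q₀ : Set H) : ℝ≥0∞ :=
  D.sumCubes fun k Q =>
    if Q ⊆ Q₀ ∧ D.inBWGL d A ε k Q then ENNReal.ofReal (5 * D.ρ ^ k) ^ d else 0

/-- `Σ_{Q ⊆ Q₀} β_E^{d,p}(C₀ B_Q)² ℓ(Q)^d`. -/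
def betaSum (D : ChristDavid E) (d : ℕ) (p C₀ : ℝ) (Q₀ : Set H) : ℝ≥0∞ :=
  D.sumCubes fun k Q =>
    if Q ⊆ Q₀ then
      betaInf d p E (D.center k Q) (C₀ * (5 * D.ρ ^ k)) ^ 2 *
        ENNReal.ofReal (5 * D.ρ ^ k) ^ d
    else 0

/-- `E` satisfies the bilateral weak geometric lemma. -/
def SatisfiesBWGL (D : ChristDavid E) (d : ℕ) : Prop :=
  ∀ A ε : ℝ, 1 ≤ A → 0 < ε → ∃ C : ℝ, 0 < C ∧
    ∀ (k₀ : ℤ), ∀ Q₀ ∈ D.cubes k₀,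
      D.bwglSum d A ε Q₀ ≤ ENNReal.ofReal C * ENNReal.ofReal (5 * D.ρ ^ k₀) ^ d

end ChristDavid

/-- Lower content `d`-regularity with constant `c`. -/
def LowerContentRegular (d : ℕ) (c : ℝ) (E : Set H) : Prop :=
  ∀ x ∈ E, ∀ r : ℝ, 0 < r → ENNReal.ofReal r < EMetric.diam E →
    ENNReal.ofReal (c * r ^ d) ≤ hContent d (E ∩ closedBall x r)

/-- Ahlfors `d`-regularity with constant `A₀`. -/
def AhlforsRegular [MeasurableSpace H] [BorelSpace H] (d : ℕ) (A₀ : ℝ) (E : Set H) : Prop :=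
  ∀ x ∈ E, ∀ r : ℝ, 0 < r → ENNReal.ofReal r < EMetric.diam E →
    ENNReal.ofReal (r ^ d / A₀) ≤ μH[(d : ℝ)] (E ∩ closedBall x r) ∧
      μH[(d : ℝ)] (E ∩ closedBall x r) ≤ ENNReal.ofReal (A₀ * r ^ d)

/-- Uniform `d`-rectifiability: Ahlfors `d`-regularity together with big pieces of
Lipschitz images of `ℝ^d`. -/
def UniformlyRectifiable [MeasurableSpace H] [BorelSpace H] (d : ℕ) (E : Set H) : Prop :=
  (∃ A₀ : ℝ, 1 ≤ A₀ ∧ AhlforsRegular d A₀ E) ∧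
    ∃ L θ : ℝ, 0 < L ∧ 0 < θ ∧
      ∀ x ∈ E, ∀ r : ℝ, 0 < r → ENNReal.ofReal r < EMetric.diam E →
        ∃ f : EuclideanSpace ℝ (Fin d) → H,
          LipschitzWith (Real.toNNReal L) f ∧
            ENNReal.ofReal (θ * r ^ d) ≤
              μH[(d : ℝ)] (E ∩ closedBall x r ∩ f '' closedBall 0 r)

/-- `(ε, d, δ₀)`-Reifenberg flatness. -/
def ReifenbergFlat (ε : ℝ) (d : ℕ) (δ₀ : ℝ) (E : Set H) : Prop :=
  ∀ x ∈ E, ∀ r : ℝ, 0 < r → r < δ₀ →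
    ∃ P : Set H, IsDPlane d P ∧ dBall x r E P ≤ ε

end

/-- The radius `r_k = 10^{-k}`. -/
noncomputable def radK (k : ℕ) : ℝ := (10 : ℝ)⁻¹ ^ k

open Polynomial in
theorem det_one_add_smul_eq_sum {E : Type*} [NormedAddCommGroup E] [NormedSpace ℝ E]
    [FiniteDimensional ℝ E] {n : ℕ} (hn : n = Module.finrank ℝ E) (a : ℕ → ℝ)
    (ha : Set.InjOn a (Finset.range (n + 1))) (A : E →L[ℝ] E) (s : ℝ) :
    (1 + s • A).det = ∑ i ∈ Finset.range (n + 1),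
      (1 + a i • A).det * (Lagrange.basis (Finset.range (n + 1)) a i).eval s := by
  let b := Module.finBasis ℝ E
  let M := LinearMap.toMatrix b b (A : E →ₗ[ℝ] E)
  let p : ℝ[X] := Matrix.det ((X : ℝ[X]) • M.map C + (1 : Matrix _ _ ℝ).map C)
  have hp : ∀ t, p.eval t = (1 + t • A).det := by
    intro t
    have h1 : (1 + t • A).det = LinearMap.det ((1 + t • A : E →L[ℝ] E) : E →ₗ[ℝ] E) := rfl
    rw [h1, ← LinearMap.det_toMatrix b]
    have h2 : p.eval t = ((Polynomial.evalRingHom t).mapMatrix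
      ((X : ℝ[X]) • M.map C + (1 : Matrix _ _ ℝ).map C)).det := by
      rw [← RingHom.map_det]; rfl
    rw [h2]
    congr 1
    ext i j
    simp [M, LinearMap.toMatrix_apply, Matrix.one_apply, Finsupp.single_apply]
    rw [mul_comm, add_comm]; congr 1; split_ifs <;> simp_all
  have hdeg : p.degree < (Finset.range (n + 1)).card := by
    rw [Finset.card_range]
    refine lt_of_le_of_lt Polynomial.degree_le_natDegree ?_
    have := Polynomial.natDegree_det_X_add_C_le M (1 : Matrix _ _ ℝ)
    rw [Fintype.card_fin] at this
    have h3 : p.natDegree < n + 1 := by rw [hn]; exact Nat.lt_succ_of_le this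
    exact_mod_cast h3
  have := Lagrange.eq_interpolate_of_eval_eq (f := p) (fun i => (1 + a i • A).det) ha hdeg
    (fun i _ => hp (a i))
  rw [← hp s, this, Lagrange.interpolate_apply, Polynomial.eval_finsetSum]
  simp

theorem id_add_smul_bijective {E : Type*} [NormedAddCommGroup E] [NormedSpace ℝ E]
    [CompleteSpace E] {h : E → E} {K : ℝ≥0} (hK : LipschitzWith K h) (hK1 : K < 1) :
    Function.Bijective fun x => x + h x := by
  constructor
  · intro x y hxy
    by_contra hne
    have h1 := hK.dist_le_mul x y
    have h2 : dist x y = dist (h x) (h y) := by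
      rw [dist_eq_norm, dist_eq_norm, ← norm_neg]
      congr 1
      have : x + h x = y + h y := hxy
      rw [neg_sub, sub_eq_sub_iff_add_eq_add, add_comm (h x), this]
    have h3 : 0 < dist x y := dist_pos.2 hne
    have h4 : (K : ℝ) < 1 := by exact_mod_cast hK1
    nlinarith
  · intro z
    have hc : ContractingWith K (fun x => z - h x) :=
      ⟨hK1, LipschitzWith.of_dist_le_mul fun x y => by
        rw [dist_sub_left]; exact hK.dist_le_mul x y⟩
    refine ⟨hc.fixedPoint, ?_⟩
    have := hc.fixedPoint_isFixedPt
    have h' : z - h (hc.fixedPoint) = hc.fixedPoint := this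
    change hc.fixedPoint + h (hc.fixedPoint) = z
    nth_rewrite 1 [← h']
    abel

/-- Radial retraction onto the closed ball of radius `R`. -/
noncomputable def radialRetract {E : Type*} [NormedAddCommGroup E] [NormedSpace ℝ E]
    (R : ℝ) (x : E) : E :=
  (R / max R ‖x‖) • x

section
variable {E : Type*} [NormedAddCommGroup E] [NormedSpace ℝ E] {R : ℝ}

theorem radialRetract_of_le (hR : 0 < R) {x : E} (hx : ‖x‖ ≤ R) : radialRetract R x = x := by
  rw [radialRetract, max_eq_left hx, div_self hR.ne', one_smul]

theorem norm_radialRetract_of_ge (hR : 0 < R) {x : E} (hx : R ≤ ‖x‖) :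
    ‖radialRetract R x‖ = R := by
  have : 0 < ‖x‖ := hR.trans_le hx
  rw [radialRetract, max_eq_right hx, norm_smul, Real.norm_of_nonneg (by positivity)]
  field_simp

theorem norm_radialRetract_le (hR : 0 < R) (x : E) : ‖radialRetract R x‖ ≤ R := by
  rcases le_total ‖x‖ R with h | h
  · rwa [radialRetract_of_le hR h]
  · exact (norm_radialRetract_of_ge hR h).le

theorem lipschitzWith_radialRetract (hR : 0 < R) :
    LipschitzWith 2 (radialRetract R : E → E) := by
  refine LipschitzWith.of_dist_le_mul fun x y => ?_
  set a := max R ‖x‖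
  set b := max R ‖y‖
  have ha : 0 < a := lt_of_lt_of_le hR (le_max_left _ _)
  have hb : 0 < b := lt_of_lt_of_le hR (le_max_left _ _)
  have hRa : R ≤ a := le_max_left _ _
  have hyb : ‖y‖ ≤ b := le_max_right _ _
  have hab : |b - a| ≤ ‖x - y‖ := by
    have h1 : |b - a| ≤ |‖y‖ - ‖x‖| := by
      have := abs_max_sub_max_le_max R ‖y‖ R ‖x‖
      simpa [a, b] using this
    rw [norm_sub_rev]
    exact h1.trans (abs_norm_sub_norm_le y x)
  have e : radialRetract R x - radialRetract R y =
      (R / a) • (x - y) + (R / a * ((b - a) / b)) • y := by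
    simp only [radialRetract]
    rw [smul_sub, sub_add, ← sub_smul]
    congr 2
    field_simp
    simp [a, b, mul_comm]
  rw [dist_eq_norm, dist_eq_norm, e]
  refine (norm_add_le _ _).trans ?_
  rw [norm_smul, norm_smul, Real.norm_eq_abs, Real.norm_eq_abs, abs_mul, abs_div (b - a) b,
    abs_of_pos hb, abs_of_pos (div_pos hR ha)]
  have h1 : R / a ≤ 1 := (div_le_one ha).2 hRa
  have h2 : |b - a| / b * ‖y‖ ≤ ‖x - y‖ := by
    rw [div_mul_eq_mul_div, div_le_iff₀ hb]
    exact mul_le_mul hab hyb (norm_nonneg _) (norm_nonneg _)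
  have h3 : 0 ≤ R / a := (div_pos hR ha).le
  have := mul_le_mul h1 h2 (by positivity) zero_le_one
  have := mul_le_of_le_one_left (norm_nonneg (x - y)) h1
  push_cast
  nlinarith
end

section
variable {E : Type*} [NormedAddCommGroup E]

theorem ContinuousLinearMap.det_eq_zero_of_inner_eq_zero [InnerProductSpace ℝ E]
    [FiniteDimensional ℝ E] {A : E →L[ℝ] E}
    {w : E} (hw : w ≠ 0) (h : ∀ v, inner ℝ w (A v) = 0) : A.det = 0 := by
  by_contra hdet
  have hs : Function.Surjective A := (A.toContinuousLinearEquivOfDetNeZero hdet).surjective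
  obtain ⟨v, hv⟩ := hs w
  have := h v
  rw [hv, inner_self_eq_zero] at this
  exact hw this

theorem ContinuousLinearMap.det_one_add_smul_pos [NormedSpace ℝ E] [FiniteDimensional ℝ E]
    {A : E →L[ℝ] E} {K t : ℝ}
    (hA : ‖A‖ ≤ K) (ht : 0 ≤ t) (htK : t * K < 1) : 0 < (1 + t • A).det := by
  have hne : ∀ s ∈ Icc 0 t, (1 + s • A).det ≠ 0 := by
    intro s hs h0
    have hK : 0 ≤ K := (norm_nonneg _).trans hA
    have h1 : ‖-(s • A)‖ < 1 := by
      rw [norm_neg, norm_smul, Real.norm_of_nonneg hs.1]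
      calc s * ‖A‖ ≤ t * K := mul_le_mul hs.2 hA (norm_nonneg _) ht
        _ < 1 := htK
    have hu : IsUnit (1 + s • A) := by
      have := (Units.oneSub _ h1).isUnit
      simpa using this
    have hd : IsUnit (LinearMap.det ((1 + s • A : E →L[ℝ] E) : E →ₗ[ℝ] E)) := by
      have h2 := hu.map (ContinuousLinearMap.toLinearMapRingHom : (E →L[ℝ] E) →+* (E →ₗ[ℝ] E))
      exact h2.map LinearMap.det
    exact hd.ne_zero h0
  have hc : ContinuousOn (fun s : ℝ => (1 + s • A).det) (Icc 0 t) := by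
    apply Continuous.continuousOn
    exact ContinuousLinearMap.continuous_det.comp (by fun_prop)
  by_contra hneg
  have h0 : (0 : ℝ) ∈ Icc ((1 + t • A).det) ((1 + (0 : ℝ) • A).det) := by
    refine ⟨not_lt.1 hneg, ?_⟩
    simp [ContinuousLinearMap.det]
  obtain ⟨s, hs, hs0⟩ := intermediate_value_Icc' ht hc h0
  exact hne s hs hs0

end

/-- Gluing by zero outside a ball, along a sphere where the map vanishes. -/
theorem lipschitzWith_comp_radialRetract {E F : Type*} [NormedAddCommGroup E] [NormedSpace ℝ E]
    [NormedAddCommGroup F] {g : E → F} {R : ℝ} (hR : 0 < R) {K : ℝ≥0}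
    (hg : LipschitzOnWith K g (closedBall 0 R)) :
    LipschitzWith (K * 2) (g ∘ radialRetract R) := by
  rw [← lipschitzOnWith_univ]
  refine hg.comp (lipschitzWith_radialRetract hR).lipschitzOnWith ?_
  intro x _
  rw [mem_closedBall_zero_iff]
  exact norm_radialRetract_le hR x

theorem exists_add_eq_zero_of_contDiff {E : Type*} [NormedAddCommGroup E]
    [InnerProductSpace ℝ E] [FiniteDimensional ℝ E] {v : E → E} (hv : ContDiff ℝ 1 v) {R : ℝ}
    (hR : 0 < R) (hsupp : ∀ x, R ≤ ‖x‖ → v x = 0) : ∃ x, x + v x = 0 := by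
  by_contra! hne
  borelize E
  let F : E → E := fun x => x + v x
  let G : E → E := fun x => (R / ‖F x‖) • F x
  let g : E → E := fun x => G x - x
  have hF : ContDiff ℝ 1 F := contDiff_id.add hv
  have hFn : ContDiff ℝ 1 (fun x => ‖F x‖) := hF.norm ℝ hne
  have hG : ContDiff ℝ 1 G :=
    (contDiff_const.div hFn (fun x => norm_ne_zero_iff.2 (hne x))).smul hF
  have hg : ContDiff ℝ 1 g := hG.sub contDiff_id
  have hGn : ∀ x, ‖G x‖ = R := by
    intro x
    have : 0 < ‖F x‖ := norm_pos_iff.2 (hne x)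
    simp only [G]
    rw [norm_smul, Real.norm_of_nonneg (by positivity)]
    field_simp
  have hg0 : ∀ x, ‖x‖ = R → g x = 0 := by
    intro x hx
    have : F x = x := by simp [F, hsupp x hx.ge]
    simp only [g, G, this, hx, div_self hR.ne', one_smul, sub_self]
  -- derivative bound
  obtain ⟨K, hK⟩ : ∃ K : ℝ, ∀ x ∈ closedBall (0 : E) R, ‖fderiv ℝ g x‖ ≤ K :=
    (isCompact_closedBall (0 : E) R).exists_bound_of_continuousOn
      (hg.continuous_fderiv one_ne_zero).continuousOn
  have hgl : LipschitzOnWith (Real.toNNReal K) g (closedBall 0 R) := by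
    refine (convex_closedBall (0 : E) R).lipschitzOnWith_of_nnnorm_fderiv_le
      (fun x _ => (hg.differentiable one_ne_zero) x) (fun x hx => ?_)
    rw [← NNReal.coe_le_coe]
    exact (hK x hx).trans (Real.le_coe_toNNReal K)
  have hhl := lipschitzWith_comp_radialRetract hR hgl
  set K' : ℝ≥0 := Real.toNNReal K * 2 with hK'
  set h : E → E := g ∘ radialRetract R with hh
  have hhin : ∀ x, ‖x‖ ≤ R → h x = g x := fun x hx => by
    simp [h, radialRetract_of_le hR hx]
  have hhout : ∀ x, R ≤ ‖x‖ → h x = 0 := fun x hx =>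
    hg0 _ (norm_radialRetract_of_ge hR hx)
  -- small times
  let t₀ : ℝ := 1 / (K' + 1)
  have ht₀ : 0 < t₀ := by positivity
  have ht₀K : t₀ * K' < 1 := by
    simp only [t₀]
    rw [div_mul_eq_mul_div, one_mul, div_lt_one (by positivity)]
    linarith
  have ht₀1 : t₀ ≤ 1 := by
    simp only [t₀]
    rw [div_le_one (by positivity)]
    linarith [K'.2]
  have hKK' : ∀ x ∈ closedBall (0 : E) R, ‖fderiv ℝ g x‖ ≤ K' := by
    intro x hx
    refine (hK x hx).trans ((Real.le_coe_toNNReal K).trans ?_)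
    rw [hK']; push_cast
    linarith [(Real.toNNReal K).2]
  have hbij : ∀ t ∈ Icc 0 t₀, Function.Bijective fun x => x + t • h x := by
    intro t ht
    have : LipschitzWith (Real.toNNReal t * K') (fun x => t • h x) := by
      refine LipschitzWith.of_dist_le_mul fun x y => ?_
      rw [dist_smul₀, Real.norm_of_nonneg ht.1]
      push_cast
      rw [Real.coe_toNNReal t ht.1, mul_assoc]
      exact mul_le_mul_of_nonneg_left (hhl.dist_le_mul x y) ht.1
    refine id_add_smul_bijective this ?_
    rw [← NNReal.coe_lt_coe]
    push_cast
    rw [Real.coe_toNNReal t ht.1]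
    exact lt_of_le_of_lt (mul_le_mul_of_nonneg_right ht.2 K'.2) ht₀K
  set B : Set E := closedBall (0 : E) R with hB
  have himg : ∀ t ∈ Icc 0 t₀, (fun x => x + t • g x) '' B = B := by
    intro t ht
    apply Subset.antisymm
    · rintro _ ⟨x, hx, rfl⟩
      have hx' : ‖x‖ ≤ R := mem_closedBall_zero_iff.1 hx
      rw [hB, mem_closedBall_zero_iff]
      have e : x + t • g x = (1 - t) • x + t • G x := by
        simp only [g]; module
      change ‖x + t • g x‖ ≤ R
      rw [e]
      refine (norm_add_le _ _).trans ?_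
      rw [norm_smul, norm_smul, hGn, Real.norm_of_nonneg ht.1,
        Real.norm_of_nonneg (by linarith [ht.2])]
      nlinarith [ht.2]
    · intro z hz
      obtain ⟨x, hx⟩ := (hbij t ht).2 z
      have hx : x + t • h x = z := hx
      have hxR : ‖x‖ ≤ R := by
        by_contra hlt
        push Not at hlt
        rw [hhout x hlt.le, smul_zero, add_zero] at hx
        rw [hx] at hlt
        exact absurd (mem_closedBall_zero_iff.1 hz) (not_le.2 hlt)
      refine ⟨x, mem_closedBall_zero_iff.2 hxR, ?_⟩
      change x + t • g x = z
      rw [← hhin x hxR, hx]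
  have hvol : ∀ t ∈ Icc 0 t₀,
      ∫ x in B, (1 + t • fderiv ℝ g x).det = (volume B).toReal := by
    intro t ht
    have h1 := lintegral_abs_det_fderiv_eq_addHaar_image (μ := (volume : Measure E))
      (s := B) (f := fun x => x + t • g x) (f' := fun x => 1 + t • fderiv ℝ g x)
      measurableSet_closedBall
      (fun x _ => by
        have hd := ((hg.differentiable one_ne_zero) x).hasFDerivAt
        exact ((hasFDerivAt_id x).add (hd.const_smul t)).hasFDerivWithinAt)
      (by
        intro x hx y hy hxy
        apply (hbij t ht).1
        change x + t • h x = y + t • h y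
        rw [hhin x (mem_closedBall_zero_iff.1 hx), hhin y (mem_closedBall_zero_iff.1 hy)]
        exact hxy)
    rw [himg t ht] at h1
    rw [← h1, integral_eq_lintegral_of_nonneg_ae]
    · congr 1
      refine setLIntegral_congr_fun measurableSet_closedBall fun x hx => ?_
      rw [abs_of_pos]
      exact ContinuousLinearMap.det_one_add_smul_pos (hKK' x hx) ht.1
        (lt_of_le_of_lt (mul_le_mul_of_nonneg_right ht.2 K'.2) ht₀K)
    · refine (ae_restrict_iff' measurableSet_closedBall).2 (Filter.Eventually.of_forall ?_)
      intro x hx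
      exact (ContinuousLinearMap.det_one_add_smul_pos (hKK' x hx) ht.1
        (lt_of_le_of_lt (mul_le_mul_of_nonneg_right ht.2 K'.2) ht₀K)).le
    · apply Continuous.aestronglyMeasurable
      have := hg.continuous_fderiv one_ne_zero
      exact ContinuousLinearMap.continuous_det.comp (by fun_prop)
  -- time one
  have hone : ∀ x, (1 + (1 : ℝ) • fderiv ℝ g x).det = 0 := by
    intro x
    have hd := ((hG.differentiable one_ne_zero) x).hasFDerivAt
    have e : 1 + (1 : ℝ) • fderiv ℝ g x = fderiv ℝ G x := by
      have : fderiv ℝ g x = fderiv ℝ G x - 1 := by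
        exact (hd.sub (hasFDerivAt_id x)).fderiv
      rw [this]; simp
    rw [e]
    refine ContinuousLinearMap.det_eq_zero_of_inner_eq_zero (w := G x) ?_ ?_
    · rw [← norm_ne_zero_iff, hGn]; exact hR.ne'
    · intro w
      have h1 : HasFDerivAt (fun y => inner ℝ (G y) (G y))
        ((fderivInnerCLM ℝ (G x, G x)).comp ((fderiv ℝ G x).prod (fderiv ℝ G x))) x :=
        hd.inner ℝ hd
      have h2 : (fun y => inner ℝ (G y) (G y)) = fun _ => R ^ 2 := by
        ext y; rw [real_inner_self_eq_norm_sq, hGn]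
      rw [h2] at h1
      have h3 := h1.unique (hasFDerivAt_const (R ^ 2) x)
      have h4 := congrArg (fun L => L w) h3
      simp [real_inner_comm] at h4
      linarith
  -- interpolation
  set n := Module.finrank ℝ E with hn
  let a : ℕ → ℝ := fun i => t₀ * (i / (n + 1))
  have ha : Function.Injective a := by
    intro i j hij
    have h1 : (i : ℝ) / (n + 1) = j / (n + 1) := mul_left_cancel₀ ht₀.ne' hij
    have h2 : (n + 1 : ℝ) ≠ 0 := by positivity
    have h3 : (i : ℝ) = j := by
      field_simp at h1; exact h1
    exact_mod_cast h3
  have ha' : ∀ i ∈ Finset.range (n + 1), a i ∈ Icc 0 t₀ := by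
    intro i hi
    refine ⟨by positivity, ?_⟩
    refine mul_le_of_le_one_right ht₀.le ?_
    rw [div_le_one (by positivity)]
    have := Finset.mem_range.1 hi
    exact_mod_cast this.le
  have hint : ∀ t : ℝ, IntegrableOn (fun x => (1 + t • fderiv ℝ g x).det) B volume := by
    intro t
    refine ContinuousOn.integrableOn_compact (isCompact_closedBall _ _) (Continuous.continuousOn ?_)
    have := hg.continuous_fderiv one_ne_zero
    exact ContinuousLinearMap.continuous_det.comp (by fun_prop)
  have key : ∫ x in B, (1 + (1 : ℝ) • fderiv ℝ g x).det = (volume B).toReal := by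
    simp_rw [det_one_add_smul_eq_sum hn a ha.injOn _ (1 : ℝ)]
    rw [integral_finsetSum]
    · simp_rw [integral_mul_const]
      rw [Finset.sum_congr rfl fun i hi => by rw [hvol _ (ha' i hi)], ← Finset.mul_sum,
        ← Polynomial.eval_finsetSum, Lagrange.sum_basis ha.injOn ⟨0, by simp⟩]
      simp
    · intro i _
      exact (hint (a i)).mul_const _
  simp_rw [hone] at key
  rw [integral_zero] at key
  have h1 : 0 < (volume B).toReal :=
    ENNReal.toReal_pos (measure_closedBall_pos _ _ hR).ne' (isCompact_closedBall _ _).measure_ne_top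
  linarith

/-- A continuous map of a closed ball that moves points by at most `δ` covers the ball whose
radius is smaller by `δ`. -/
theorem exists_eq_of_dist_id_le {E : Type*} [NormedAddCommGroup E]
    [InnerProductSpace ℝ E] [FiniteDimensional ℝ E] {h : E → E} {R δ : ℝ} (hR : 0 < R)
    (hc : ContinuousOn h (closedBall 0 R)) (hδ : ∀ x, ‖x‖ ≤ R → ‖h x - x‖ ≤ δ)
    {p : E} (hp : ‖p‖ + δ ≤ R) : ∃ x, ‖x‖ ≤ R ∧ h x = p := by
  by_contra! hmiss
  have hδ0 : 0 ≤ δ := (norm_nonneg _).trans (hδ 0 (by simpa using hR.le))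
  let u : E → E := fun x => h (radialRetract R x) - radialRetract R x
  have hu : UniformContinuous u := by
    have h1 : UniformContinuousOn (fun x => h x - x) (closedBall 0 R) :=
      (isCompact_closedBall (0 : E) R).uniformContinuousOn_of_continuous (hc.sub continuousOn_id)
    rw [← uniformContinuousOn_univ]
    exact h1.comp (lipschitzWith_radialRetract hR).uniformContinuous.uniformContinuousOn
      (fun x _ => mem_closedBall_zero_iff.2 (norm_radialRetract_le hR x))
  have hub : ∀ x, ‖u x‖ ≤ δ := fun x => hδ _ (norm_radialRetract_le hR x)
  have hne : ∀ x, 0 < ‖x + u x - p‖ := by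
    intro x
    rw [norm_pos_iff, sub_ne_zero]
    intro hx
    have hxR : ‖x‖ ≤ R := by
      have e : x = p - u x := by rw [← hx]; abel
      rw [e]
      exact (norm_sub_le _ _).trans (by linarith [hub x])
    apply hmiss x hxR
    rw [← hx]
    simp [u, radialRetract_of_le hR hxR]
  obtain ⟨η, hη, hηm⟩ : ∃ η, 0 < η ∧ ∀ x, η ≤ ‖x + u x - p‖ := by
    have hcont : Continuous fun x => ‖x + u x - p‖ :=
      ((continuous_id.add hu.continuous).sub continuous_const).norm
    obtain ⟨x₀, -, hx₀⟩ := (isCompact_closedBall (0 : E) (R + 1)).exists_isMinOn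
      ⟨0, mem_closedBall_self (by linarith)⟩ hcont.continuousOn
    refine ⟨min ‖x₀ + u x₀ - p‖ 1, lt_min (hne x₀) one_pos, fun x => ?_⟩
    by_cases hx : ‖x‖ ≤ R + 1
    · exact (min_le_left _ _).trans (hx₀ (mem_closedBall_zero_iff.2 hx))
    · refine (min_le_right _ _).trans ?_
      push Not at hx
      have e : x = (x + u x - p) + (p - u x) := by abel
      have h1 : ‖x‖ ≤ ‖x + u x - p‖ + ‖p - u x‖ := by
        conv_lhs => rw [e]
        exact norm_add_le _ _
      have h2 := norm_sub_le p (u x)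
      linarith [hub x]
  obtain ⟨g, hg, hgu⟩ := hu.exists_contDiff_dist_le (half_pos hη)
  have hgb : ∀ x, ‖g x‖ ≤ δ + η / 2 := by
    intro x
    have h1 := (hgu x).le
    rw [dist_eq_norm] at h1
    have h2 := norm_le_norm_add_norm_sub' (g x) (u x)
    linarith [hub x]
  let χ : ContDiffBump (0 : E) := ⟨δ + η, δ + η + 1, by linarith, by linarith⟩
  let v : E → E := fun y => χ y • g (y + p)
  have hv : ContDiff ℝ 1 v := by
    refine ContDiff.smul χ.contDiff ((hg.of_le ?_).comp (contDiff_id.add contDiff_const))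
    exact_mod_cast le_top
  obtain ⟨y, hy⟩ := exists_add_eq_zero_of_contDiff hv (R := δ + η + 1) (by linarith)
    (fun x hx => by
      have : χ x = 0 := χ.zero_of_le_dist (by rw [dist_zero_right]; exact hx)
      simp [v, this])
  have hvb : ‖v y‖ ≤ δ + η / 2 := by
    simp only [v]
    rw [norm_smul, Real.norm_of_nonneg χ.nonneg]
    exact (mul_le_of_le_one_left (norm_nonneg _) χ.le_one).trans (hgb _)
  have hyb : ‖y‖ ≤ δ + η := by
    have e : y = -v y := eq_neg_of_add_eq_zero_left hy
    rw [e, norm_neg]; linarith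
  have hχ : χ y = 1 := χ.one_of_mem_closedBall (mem_closedBall_zero_iff.2 hyb)
  have hy2 : y + g (y + p) = 0 := by
    have : v y = g (y + p) := by simp [v, hχ]
    rwa [this] at hy
  have h1 := hηm (y + p)
  have h2 : y + p + u (y + p) - p = u (y + p) - g (y + p) := by
    calc y + p + u (y + p) - p = y + u (y + p) := by abel
      _ = -g (y + p) + u (y + p) :=
        congrArg (· + u (y + p)) (eq_neg_of_add_eq_zero_left hy2)
      _ = u (y + p) - g (y + p) := by abel
  rw [h2, ← dist_eq_norm, dist_comm] at h1
  linarith [hgu (y + p)]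

section
variable {H : Type*} [NormedAddCommGroup H] [InnerProductSpace ℝ H]

/-- `Q` is the orthogonal projection onto a `d`-dimensional linear subspace. -/
def IsDProj (d : ℕ) (Q : H →L[ℝ] H) : Prop :=
  ∃ (W : Submodule ℝ H) (_ : FiniteDimensional ℝ W), Module.finrank ℝ W = d ∧
    Q = W.starProjection

namespace IsDProj
variable {d : ℕ} {Q Q' : H →L[ℝ] H}

theorem idem (h : IsDProj d Q) (v : H) : Q (Q v) = Q v := by
  obtain ⟨W, _, -, rfl⟩ := h
  exact Submodule.starProjection_eq_self_iff.2 (W.starProjection_apply_mem v)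

theorem norm_apply_le (h : IsDProj d Q) (v : H) : ‖Q v‖ ≤ ‖v‖ := by
  obtain ⟨W, _, -, rfl⟩ := h
  exact W.norm_starProjection_apply_le v

theorem norm_sub_apply_le (h : IsDProj d Q) (v : H) : ‖v - Q v‖ ≤ ‖v‖ := by
  obtain ⟨W, _, -, rfl⟩ := h
  have := Wᗮ.norm_starProjection_apply_le v
  rwa [Submodule.starProjection_orthogonal_val] at this

theorem inner_left (h : IsDProj d Q) (v w : H) : inner ℝ (Q v) w = inner ℝ v (Q w) := by
  obtain ⟨W, _, -, rfl⟩ := h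
  exact W.inner_starProjection_left_eq_right v w

/-- Two orthogonal projections are close as soon as each range lies close to the other. -/
theorem norm_sub_le (h : IsDProj d Q) (h' : IsDProj d Q') {c : ℝ} (hc : 0 ≤ c)
    (h1 : ∀ v, Q v = v → ‖v - Q' v‖ ≤ c * ‖v‖) (h2 : ∀ v, Q' v = v → ‖v - Q v‖ ≤ c * ‖v‖) :
    ‖Q - Q'‖ ≤ 2 * c := by
  refine ContinuousLinearMap.opNorm_le_bound _ (by positivity) fun v => ?_
  have e : (Q - Q') v = Q (v - Q' v) - (Q' v - Q (Q' v)) := by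
    simp only [sub_apply, map_sub]; abel
  have b2 : ‖Q' v - Q (Q' v)‖ ≤ c * ‖v‖ :=
    (h2 _ (h'.idem v)).trans (mul_le_mul_of_nonneg_left (h'.norm_apply_le v) hc)
  have b1 : ‖Q (v - Q' v)‖ ≤ c * ‖v‖ := by
    set z := Q (v - Q' v) with hz
    rcases eq_or_ne z 0 with h0 | h0
    · rw [h0, norm_zero]; positivity
    have e1 : ‖z‖ ^ 2 = inner ℝ v (z - Q' z) := by
      have a1 : inner ℝ z z = inner ℝ (v - Q' v) (Q z) := by
        conv_lhs => rw [hz, h.inner_left]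
      have a2 : Q z = z := h.idem _
      rw [← real_inner_self_eq_norm_sq, a1, a2, inner_sub_left, inner_sub_right, h'.inner_left]
    have e2 := h1 z (h.idem _)
    have e3 := real_inner_le_norm v (z - Q' z)
    have e4 : 0 < ‖z‖ := norm_pos_iff.2 h0
    have e5 : ‖z‖ * ‖z‖ ≤ (c * ‖v‖) * ‖z‖ := by
      calc ‖z‖ * ‖z‖ = ‖z‖ ^ 2 := by ring
        _ ≤ ‖v‖ * ‖z - Q' z‖ := by rw [e1]; exact e3
        _ ≤ ‖v‖ * (c * ‖z‖) := mul_le_mul_of_nonneg_left e2 (norm_nonneg _)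
        _ = _ := by ring
    exact le_of_mul_le_mul_right e5 e4
  rw [e]
  exact (_root_.norm_sub_le _ _).trans (by linarith)

theorem exists_eq_of_norm_sub_le (h : IsDProj d Q) {g : H → H} {R δ : ℝ} (hR : 0 < R)
    (hc : ContinuousOn g {w | Q w = w ∧ ‖w‖ ≤ R})
    (hδ : ∀ w, Q w = w → ‖w‖ ≤ R → ‖Q (g w) - w‖ ≤ δ) {p : H} (hpQ : Q p = p)
    (hp : ‖p‖ + δ ≤ R) : ∃ w, Q w = w ∧ ‖w‖ ≤ R ∧ Q (g w) = p := by
  obtain ⟨W, _, -, rfl⟩ := h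
  have hW : ∀ w : W, W.starProjection (w : H) = w :=
    fun w => Submodule.starProjection_eq_self_iff.2 w.2
  obtain ⟨x, hx, hxp⟩ := exists_eq_of_dist_id_le (E := W)
    (h := fun w => W.orthogonalProjectionOnto (g w)) (p := W.orthogonalProjectionOnto p) (δ := δ) hR
    (by
      refine W.orthogonalProjectionOnto.continuous.comp_continuousOn
        (hc.comp continuous_subtype_val.continuousOn fun w hw => ⟨hW w, ?_⟩)
      simpa using hw)
    (by
      intro x hx
      have := hδ x (hW x) (by simpa using hx)
      rw [Submodule.coe_norm]
      exact this)
    (by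
      have : ‖W.orthogonalProjectionOnto p‖ = ‖p‖ := by
        rw [Submodule.coe_norm, ← Submodule.starProjection_apply, hpQ]
      rw [this]; exact hp)
  refine ⟨x, hW x, by simpa using hx, ?_⟩
  rw [Submodule.starProjection_apply, hxp, ← Submodule.starProjection_apply, hpQ]

end IsDProj

theorem IsDPlane.exists_isDProj {d : ℕ} (hd : 1 ≤ d) {P : Set H} (hP : IsDPlane d P) :
    ∃ Q : H →L[ℝ] H, IsDProj d Q ∧ P.Nonempty ∧ ∀ p ∈ P, (∀ y, y ∈ P ↔ Q (y - p) = y - p) ∧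
      ∀ y, infDist y P = ‖(y - p) - Q (y - p)‖ := by
  obtain ⟨x, W, hW, rfl⟩ := hP
  have hfd : FiniteDimensional ℝ W := Module.finite_of_finrank_pos (by omega)
  refine ⟨W.starProjection, ⟨W, hfd, hW, rfl⟩, ⟨x, 0, W.zero_mem, by simp⟩, ?_⟩
  rintro _ ⟨w, hw, rfl⟩
  have hmem : ∀ y, y ∈ (fun w => x + w) '' (W : Set H) ↔
      W.starProjection (y - (x + w)) = y - (x + w) := by
    intro y
    rw [Submodule.starProjection_eq_self_iff]
    constructor
    · rintro ⟨v, hv, rfl⟩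
      have : x + v - (x + w) = v - w := by abel
      rw [this]; exact W.sub_mem hv hw
    · intro h
      refine ⟨y - (x + w) + w, W.add_mem h hw, ?_⟩
      simp only; abel
  refine ⟨hmem, fun y => ?_⟩
  set q := (fun w => x + w) '' (W : Set H)
  set v := y - (x + w) with hv
  apply le_antisymm
  · have h1 : x + w + W.starProjection v ∈ q := by
      rw [hmem]
      have : x + w + W.starProjection v - (x + w) = W.starProjection v := by abel
      rw [this]
      exact Submodule.starProjection_eq_self_iff.2 (W.starProjection_apply_mem v)
    refine (infDist_le_dist_of_mem h1).trans ?_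
    rw [dist_eq_norm]
    apply le_of_eq
    congr 1
    rw [hv]; abel
  · refine (le_infDist (show q.Nonempty from ⟨x + w, w, hw, rfl⟩)).2 ?_
    rintro z hz
    have hz' := (hmem z).1 hz
    have e : v - W.starProjection v = (y - z) - W.starProjection (y - z) := by
      have : y - z = v - (z - (x + w)) := by rw [hv]; abel
      rw [this, map_sub W.starProjection v (z - (x + w)), hz']; abel
    rw [e, dist_eq_norm]
    exact IsDProj.norm_sub_apply_le (d := d) ⟨W, hfd, hW, rfl⟩ _

theorem IsDProj.exists_isDPlane {d : ℕ} {Q : H →L[ℝ] H} (hQ : IsDProj d Q) (z : H) :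
    ∃ P : Set H, IsDPlane d P ∧ z ∈ P ∧ (∀ y, y ∈ P ↔ Q (y - z) = y - z) ∧
      ∀ y, infDist y P = ‖(y - z) - Q (y - z)‖ := by
  obtain ⟨W, hfd, hW, rfl⟩ := hQ
  have hpl : IsDPlane d ((fun w => z + w) '' (W : Set H)) := ⟨z, W, hW, rfl⟩
  have hz : z ∈ (fun w => z + w) '' (W : Set H) := ⟨0, W.zero_mem, by simp⟩
  have hmem : ∀ y, y ∈ (fun w => z + w) '' (W : Set H) ↔
      W.starProjection (y - z) = y - z := by
    intro y
    rw [Submodule.starProjection_eq_self_iff]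
    constructor
    · rintro ⟨v, hv, rfl⟩
      simpa using hv
    · intro h
      exact ⟨y - z, h, by simp⟩
  refine ⟨_, hpl, hz, hmem, fun y => ?_⟩
  apply le_antisymm
  · have h1 : z + W.starProjection (y - z) ∈ (fun w => z + w) '' (W : Set H) :=
      ⟨_, W.starProjection_apply_mem _, rfl⟩
    refine (infDist_le_dist_of_mem h1).trans (le_of_eq ?_)
    rw [dist_eq_norm]
    congr 1
    abel
  · refine (le_infDist ⟨z, hz⟩).2 fun x hx => ?_
    have hx' := (hmem x).1 hx
    have e : (y - z) - W.starProjection (y - z) = (y - x) - W.starProjection (y - x) := by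
      have : y - x = (y - z) - (x - z) := by abel
      rw [this, map_sub W.starProjection (y - z) (x - z), hx']; abel
    rw [e, dist_eq_norm]
    exact IsDProj.norm_sub_apply_le (d := d) ⟨W, hfd, hW, rfl⟩ _

theorem dBall_comm {H : Type*} [NormedAddCommGroup H] (x : H) (r : ℝ) (E F : Set H) :
    dBall x r E F = dBall x r F E := by
  rw [dBall, dBall, max_comm]

theorem infDist_le_of_dBall_le {H : Type*} [NormedAddCommGroup H] {x : H} {r c : ℝ}
    {E F : Set H} (hr : 0 < r) (hF : F.Nonempty) (h : dBall x r E F ≤ c) {y : H} (hy : y ∈ E)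
    (hyx : dist y x ≤ r) : infDist y F ≤ c * r := by
  obtain ⟨f, hf⟩ := hF
  rw [dBall, inv_mul_le_iff₀ hr, mul_comm] at h
  refine le_trans ?_ ((le_max_left _ _).trans h)
  have hb : BddAbove (range fun y => ⨆ (_ : y ∈ E ∩ closedBall x r), infDist y F) := by
    refine ⟨r + dist x f, ?_⟩
    rintro _ ⟨z, rfl⟩
    refine Real.iSup_le (fun hz => ?_) (by positivity)
    refine (infDist_le_dist_of_mem hf).trans ((dist_triangle z x f).trans ?_)
    have : dist z x ≤ r := hz.2
    linarith
  refine le_trans ?_ (le_ciSup hb y)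
  have : Nonempty (y ∈ E ∩ closedBall x r) := ⟨⟨hy, hyx⟩⟩
  rw [ciSup_const]

theorem dBall_le {H : Type*} [NormedAddCommGroup H] {x : H} {r c : ℝ} {E F : Set H}
    (hr : 0 < r) (hc : 0 ≤ c)
    (h1 : ∀ y ∈ E, dist y x ≤ r → infDist y F ≤ c * r)
    (h2 : ∀ y ∈ F, dist y x ≤ r → infDist y E ≤ c * r) : dBall x r E F ≤ c := by
  rw [dBall, inv_mul_le_iff₀ hr, mul_comm]
  have : 0 ≤ c * r := by positivity
  exact max_le (Real.iSup_le (fun y => Real.iSup_le (fun hy => h1 y hy.1 hy.2) this) this)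
    (Real.iSup_le (fun y => Real.iSup_le (fun hy => h2 y hy.1 hy.2) this) this)

/-- Two planes that are close in a ball have close directions. -/
theorem norm_proj_sub_le_of_dBall_le {d : ℕ} {A B : Set H} {Q Q' : H →L[ℝ] H}
    (hQ : IsDProj d Q) (hQ' : IsDProj d Q') (hAn : A.Nonempty)
    (hA : ∀ p ∈ A, (∀ y, y ∈ A ↔ Q (y - p) = y - p) ∧ ∀ y, infDist y A = ‖(y - p) - Q (y - p)‖)
    (hB : ∀ p ∈ B, (∀ y, y ∈ B ↔ Q' (y - p) = y - p) ∧ ∀ y, infDist y B = ‖(y - p) - Q' (y - p)‖)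
    {u : H} (hu : u ∈ B) {R c : ℝ} (hR : 0 < R) (hc : c ≤ 1 / 3) (h : dBall u R A B ≤ c) :
    ‖Q - Q'‖ ≤ 6 * c := by
  have hAB : ∀ y ∈ A, dist y u ≤ R → infDist y B ≤ c * R :=
    fun y hy hyu => infDist_le_of_dBall_le hR ⟨u, hu⟩ h hy hyu
  have hBA : ∀ y ∈ B, dist y u ≤ R → infDist y A ≤ c * R :=
    fun y hy hyu => infDist_le_of_dBall_le hR hAn (dBall_comm u R A B ▸ h) hy hyu
  obtain ⟨p, hp⟩ := hAn
  have hu1 : ‖(u - p) - Q (u - p)‖ ≤ c * R := by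
    rw [← (hA p hp).2]; exact hBA u hu (by simpa using hR.le)
  have hc0 : 0 ≤ c := by
    by_contra hneg
    have : c * R < 0 := mul_neg_of_neg_of_pos (not_le.1 hneg) hR
    linarith [norm_nonneg ((u - p) - Q (u - p))]
  -- the point of `A` nearest to `u`
  set a := p + Q (u - p) with ha
  have haA : a ∈ A := by
    rw [(hA p hp).1]
    have : a - p = Q (u - p) := by rw [ha]; abel
    rw [this, hQ.idem]
  have hau : ‖u - a‖ ≤ c * R := by
    have : u - a = (u - p) - Q (u - p) := by rw [ha]; abel
    rw [this]; exact hu1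
  have := IsDProj.norm_sub_le hQ hQ' (c := 3 * c) (by linarith) ?_ ?_
  · linarith
  · intro v hv
    rcases eq_or_ne v 0 with rfl | hv0
    · simp
    have hvp : 0 < ‖v‖ := norm_pos_iff.2 hv0
    set s := (1 - c) * R / ‖v‖ with hs
    have hs0 : 0 < s := div_pos (mul_pos (by linarith) hR) hvp
    have hsv : s * ‖v‖ = (1 - c) * R := by rw [hs]; field_simp
    have h1 : a + s • v ∈ A := by
      rw [(hA a haA).1]; simp [hv]
    have h2 : dist (a + s • v) u ≤ R := by
      rw [dist_eq_norm]
      have e : a + s • v - u = s • v - (u - a) := by abel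
      rw [e]
      refine (norm_sub_le _ _).trans ?_
      rw [norm_smul, Real.norm_of_nonneg hs0.le, hsv]
      linarith
    have h3 := hAB _ h1 h2
    rw [(hB u hu).2] at h3
    have e : s • (v - Q' v) = ((a + s • v - u) - Q' (a + s • v - u)) +
        ((u - a) - Q' (u - a)) := by
      simp only [map_sub, map_add, map_smul, smul_sub]; abel
    have h4 : s * ‖v - Q' v‖ ≤ 2 * (c * R) := by
      rw [← Real.norm_of_nonneg hs0.le, ← norm_smul, e]
      refine (norm_add_le _ _).trans ?_
      have := hQ'.norm_sub_apply_le (u - a)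
      linarith
    have h5 : s * (3 * c * ‖v‖) = 3 * c * ((1 - c) * R) := by rw [← hsv]; ring
    refine le_of_mul_le_mul_left (h4.trans ?_) hs0
    rw [h5]
    have : 0 ≤ c * R := by positivity
    nlinarith
  · intro v hv
    rcases eq_or_ne v 0 with rfl | hv0
    · simp
    have hvp : 0 < ‖v‖ := norm_pos_iff.2 hv0
    set s := R / ‖v‖ with hs
    have hs0 : 0 < s := div_pos hR hvp
    have hsv : s * ‖v‖ = R := by rw [hs]; field_simp
    have h1 : u + s • v ∈ B := by
      rw [(hB u hu).1]; simp [hv]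
    have h2 : dist (u + s • v) u ≤ R := by
      rw [dist_eq_norm, add_sub_cancel_left, norm_smul, Real.norm_of_nonneg hs0.le, hsv]
    have h3 := hBA _ h1 h2
    rw [(hA p hp).2] at h3
    have e : s • (v - Q v) = ((u + s • v - p) - Q (u + s • v - p)) -
        ((u - p) - Q (u - p)) := by
      simp only [map_sub, map_add, map_smul, smul_sub]; abel
    have h4 : s * ‖v - Q v‖ ≤ 2 * (c * R) := by
      rw [← Real.norm_of_nonneg hs0.le, ← norm_smul, e]
      refine (norm_sub_le _ _).trans ?_
      linarith
    refine le_of_mul_le_mul_left (h4.trans ?_) hs0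
    have : s * (3 * c * ‖v‖) = 3 * (c * R) := by
      calc s * (3 * c * ‖v‖) = 3 * c * (s * ‖v‖) := by ring
        _ = _ := by rw [hsv]; ring
    rw [this]
    have : 0 ≤ c * R := by positivity
    linarith

/-- Near `y`, at scale `r`, the set `S` is the graph of an `a`-flat function over the range of
the projection `Q`. -/
structure IsGraph (S : Set H) (y : H) (Q : H →L[ℝ] H) (a r : ℝ) : Prop where
  cone : ∀ u ∈ S, ∀ v ∈ S, dist u y ≤ 4 * r → dist v y ≤ 4 * r →
    ‖(u - v) - Q (u - v)‖ ≤ a * ‖u - v‖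
  full : ∀ w, Q w = w → ‖w‖ ≤ 3 * r → ∃ u ∈ S, dist u y ≤ 4 * r ∧ Q (u - y) = w

namespace IsGraph
variable {S : Set H} {y : H} {Q Q' : H →L[ℝ] H} {a a' r : ℝ}

theorem mono (h : IsGraph S y Q a r) (haa : a ≤ a') : IsGraph S y Q a' r where
  cone u hu v hv hu' hv' := (h.cone u hu v hv hu' hv').trans
    (mul_le_mul_of_nonneg_right haa (norm_nonneg _))
  full := h.full

/-- The graph map over the range of `Q`. -/
theorem exists_section (h : IsGraph S y Q a r) (hy : y ∈ S) (hr : 0 < r) (ha : a ≤ 1 / 100) :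
    ∃ A : H → H, A 0 = y ∧
      (∀ w, Q w = w → ‖w‖ ≤ 3 * r → A w ∈ S ∧ Q (A w - y) = w ∧
        ‖(A w - y) - w‖ ≤ a * ‖A w - y‖ ∧ ‖A w - y‖ ≤ 1.02 * ‖w‖) ∧
      ∀ w w', Q w = w → ‖w‖ ≤ 3 * r → Q w' = w' → ‖w'‖ ≤ 3 * r →
        ‖A w - A w'‖ ≤ 1.02 * ‖w - w'‖ := by
  choose! A hA1 hA2 hA3 using h.full
  have key : ∀ w w', Q w = w → ‖w‖ ≤ 3 * r → Q w' = w' → ‖w'‖ ≤ 3 * r →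
      ‖(A w - A w') - (w - w')‖ ≤ a * ‖A w - A w'‖ := by
    intro w w' hw hwr hw' hwr'
    have := h.cone _ (hA1 w hw hwr) _ (hA1 w' hw' hwr') (hA2 w hw hwr) (hA2 w' hw' hwr')
    have e : Q (A w - A w') = w - w' := by
      have : A w - A w' = (A w - y) - (A w' - y) := by abel
      rw [this, map_sub, hA3 w hw hwr, hA3 w' hw' hwr']
    rwa [e] at this
  have key2 : ∀ w w', Q w = w → ‖w‖ ≤ 3 * r → Q w' = w' → ‖w'‖ ≤ 3 * r →
      ‖A w - A w'‖ ≤ 1.02 * ‖w - w'‖ := by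
    intro w w' hw hwr hw' hwr'
    have h1 := key w w' hw hwr hw' hwr'
    have h2 := norm_sub_norm_le (A w - A w') (w - w')
    have h3 := mul_le_mul_of_nonneg_right ha (norm_nonneg (A w - A w'))
    linarith [norm_nonneg (A w - A w')]
  have h3r : ‖(0 : H)‖ ≤ 3 * r := by rw [norm_zero]; positivity
  have h0 : A 0 = y := by
    have h1 := h.cone _ (hA1 0 (map_zero Q) h3r) y hy (hA2 0 (map_zero Q) h3r)
      (by rw [dist_self]; positivity)
    rw [hA3 0 (map_zero Q) h3r, sub_zero] at h1
    have h3 := mul_le_mul_of_nonneg_right ha (norm_nonneg (A 0 - y))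
    have : ‖A 0 - y‖ = 0 := by linarith [norm_nonneg (A 0 - y)]
    exact sub_eq_zero.1 (norm_eq_zero.1 this)
  refine ⟨A, h0, fun w hw hwr => ⟨hA1 w hw hwr, hA3 w hw hwr, ?_, ?_⟩, key2⟩
  · simpa [h0] using key w 0 hw hwr (map_zero Q) h3r
  · simpa [h0] using key2 w 0 hw hwr (map_zero Q) h3r

/-- Fullness is preserved, one scale down, by a map close to the identity. -/
theorem exists_image {d : ℕ} (h : IsGraph S y Q a r) (hQ : IsDProj d Q) (hQ' : IsDProj d Q')
    (hQQ : ‖Q - Q'‖ ≤ 1 / 100) (hy : y ∈ S) (hr : 0 < r) (ha : a ≤ 1 / 100)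
    {σ : H → H} (hσ : ∀ u ∈ S, ∀ v ∈ S, dist u y ≤ r → dist v y ≤ r →
      ‖(σ u - σ v) - (u - v)‖ ≤ 1 / 100 * ‖u - v‖)
    {w : H} (hw : Q' w = w) (hwr : ‖w‖ ≤ 3 * (r / 10)) :
    ∃ u ∈ S, dist u y ≤ r ∧ dist (σ u) (σ y) ≤ 4 * (r / 10) ∧ Q' (σ u - σ y) = w := by
  obtain ⟨A, hA0, hA, hAL⟩ := h.exists_section hy hr ha
  have hQv : ∀ x, ‖Q' x - Q x‖ ≤ 1 / 100 * ‖x‖ := fun x => by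
    rw [norm_sub_rev, ← sub_apply]
    exact ((Q - Q').le_opNorm x).trans (mul_le_mul_of_nonneg_right hQQ (norm_nonneg _))
  have hAy : ∀ v, Q v = v → ‖v‖ ≤ 32 / 100 * r → ‖A v - y‖ ≤ 33 / 100 * r := fun v hv hvr => by
    have := (hA v hv (by linarith)).2.2.2
    linarith
  have hAS : ∀ v, Q v = v → ‖v‖ ≤ 32 / 100 * r → A v ∈ S ∧ dist (A v) y ≤ r :=
    fun v hv hvr => ⟨(hA v hv (by linarith)).1, by
      rw [dist_eq_norm]; linarith [hAy v hv hvr]⟩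
  have hσy : ∀ v, Q v = v → ‖v‖ ≤ 32 / 100 * r →
      ‖(σ (A v) - σ y) - (A v - y)‖ ≤ 33 / 10000 * r := fun v hv hvr => by
    have := hσ _ (hAS v hv hvr).1 y hy (hAS v hv hvr).2 (by rw [dist_self]; exact hr.le)
    linarith [hAy v hv hvr]
  have hσn : ∀ v, Q v = v → ‖v‖ ≤ 32 / 100 * r → ‖σ (A v) - σ y‖ ≤ 4 * (r / 10) :=
    fun v hv hvr => by
      have h1 := norm_sub_norm_le (σ (A v) - σ y) (A v - y)
      linarith [hσy v hv hvr, hAy v hv hvr]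
  obtain ⟨v, hv, hvr, hvw⟩ := hQ.exists_eq_of_norm_sub_le
    (g := fun v => Q' (σ (A v) - σ y)) (R := 32 / 100 * r) (δ := 1 / 100 * r) (p := Q w)
    (by positivity)
    (by
      refine Q'.continuous.comp_continuousOn (ContinuousOn.sub ?_ continuousOn_const)
      have : LipschitzOnWith 2 (fun v => σ (A v)) {w | Q w = w ∧ ‖w‖ ≤ 32 / 100 * r} := by
        refine LipschitzOnWith.of_dist_le_mul ?_
        rintro v ⟨hv, hvr⟩ v' ⟨hv', hvr'⟩
        rw [dist_eq_norm, dist_eq_norm]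
        have h1 := hσ _ (hAS v hv hvr).1 _ (hAS v' hv' hvr').1 (hAS v hv hvr).2
          (hAS v' hv' hvr').2
        have h2 := norm_sub_norm_le (σ (A v) - σ (A v')) (A v - A v')
        have h3 := hAL v v' hv (by linarith) hv' (by linarith)
        have h4 : ((2 : ℝ≥0) : ℝ) = 2 := rfl
        rw [h4]
        linarith [norm_nonneg (v - v')]
      exact this.continuousOn)
    (by
      intro v hv hvr
      have h1 := hQ.norm_apply_le (Q' (σ (A v) - σ y) - Q (σ (A v) - σ y))
      have h2 := hQ.norm_apply_le ((σ (A v) - σ y) - (A v - y))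
      have e : Q (Q' (σ (A v) - σ y)) - v = Q (Q' (σ (A v) - σ y) - Q (σ (A v) - σ y)) +
          Q ((σ (A v) - σ y) - (A v - y)) := by
        rw [map_sub Q (Q' _), map_sub Q _ (A v - y), (hA v hv (by linarith)).2.1, hQ.idem]; abel
      rw [e]
      refine (norm_add_le _ _).trans ?_
      linarith [hQv (σ (A v) - σ y), hσn v hv hvr, hσy v hv hvr])
    (hQ.idem w)
    (by linarith [hQ.norm_apply_le w])
  refine ⟨A v, (hAS v hv hvr).1, (hAS v hv hvr).2, by
    rw [dist_eq_norm]; exact hσn v hv hvr, ?_⟩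
  set x := Q' (σ (A v) - σ y) with hx
  have h1 := hQv (x - w)
  have e1 : Q' (x - w) = x - w := by rw [map_sub, hw, hx, hQ'.idem]
  have e2 : Q (x - w) = 0 := by rw [map_sub, hvw, sub_self]
  rw [e1, e2, sub_zero] at h1
  have : ‖x - w‖ = 0 := by linarith [norm_nonneg (x - w)]
  exact sub_eq_zero.1 (norm_eq_zero.1 this)

theorem image {d : ℕ} (h : IsGraph S y Q a r) (hQ : IsDProj d Q) (hQ' : IsDProj d Q')
    (hQQ : ‖Q - Q'‖ ≤ 1 / 100) (hy : y ∈ S) (hr : 0 < r) (ha : a ≤ 1 / 100)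
    {σ : H → H} (hσ : ∀ u ∈ S, ∀ v ∈ S, dist u y ≤ r → dist v y ≤ r →
      ‖(σ u - σ v) - (u - v)‖ ≤ 1 / 100 * ‖u - v‖)
    (hσi : ∀ u ∈ S, ‖σ u - u‖ ≤ 1 / 10 * r)
    (hc : ∀ u ∈ S, ∀ v ∈ S, dist u y ≤ r → dist v y ≤ r →
      ‖(σ u - σ v) - Q' (σ u - σ v)‖ ≤ a' * ‖σ u - σ v‖) :
    IsGraph (σ '' S) (σ y) Q' a' (r / 10) where
  cone := by
    have key : ∀ u ∈ S, dist (σ u) (σ y) ≤ 4 * (r / 10) → dist u y ≤ r := by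
      intro u hu hd
      have h1 := hσi u hu
      have h2 := hσi y hy
      rw [dist_eq_norm] at hd ⊢
      have e : u - y = (σ u - σ y) - (σ u - u) + (σ y - y) := by abel
      rw [e]
      refine (norm_add_le _ _).trans ?_
      linarith [norm_sub_le (σ u - σ y) (σ u - u)]
    rintro _ ⟨u, hu, rfl⟩ _ ⟨v, hv, rfl⟩ hu' hv'
    exact hc u hu v hv (key u hu hu') (key v hv hv')
  full w hw hwr := by
    obtain ⟨u, hu, -, h1, h2⟩ := h.exists_image hQ hQ' hQQ hy hr ha hσ hw hwr
    exact ⟨σ u, ⟨u, hu, rfl⟩, h1, h2⟩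

end IsGraph

/-- The range of a rank `d` projection is isometric to Euclidean space. -/
theorem IsDProj.exists_isometry {d : ℕ} {Q : H →L[ℝ] H} (hQ : IsDProj d Q) :
    ∃ (φ : H →L[ℝ] EuclideanSpace ℝ (Fin d)) (ψ : EuclideanSpace ℝ (Fin d) →L[ℝ] H),
      (∀ x, ‖φ x‖ = ‖Q x‖) ∧ (∀ x, ‖ψ x‖ = ‖x‖) ∧ (∀ x, Q (ψ x) = ψ x) ∧
      ∀ x, ψ (φ x) = Q x := by
  obtain ⟨W, _, hW, rfl⟩ := hQ
  have e := ((stdOrthonormalBasis ℝ W).reindex (finCongr hW)).repr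
  refine ⟨e.toLinearIsometry.toContinuousLinearMap ∘L W.orthogonalProjectionOnto,
    W.subtypeL ∘L e.symm.toLinearIsometry.toContinuousLinearMap, fun x => ?_, fun x => ?_,
    fun x => ?_, fun x => ?_⟩
  · exact e.norm_map _
  · exact e.symm.norm_map x
  · exact Submodule.starProjection_eq_self_iff.2 (Subtype.mem _)
  · simp

/-- Packing bound for points which are separated after projecting to a `d`-dimensional space. -/
theorem exists_card_le_of_separated (d : ℕ) :
    ∃ N : ℕ, ∀ Q : H →L[ℝ] H, IsDProj d Q → ∀ (q : H) (r : ℝ), 0 < r → ∀ T : Finset H,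
      (∀ p ∈ T, ‖p - q‖ ≤ 22 * r) →
      (∀ p ∈ T, ∀ p' ∈ T, p ≠ p' → r / 2 ≤ ‖Q (p - p')‖) → T.card ≤ N := by
  obtain ⟨t, -, htf, hcov⟩ :=
    (isCompact_closedBall (0 : EuclideanSpace ℝ (Fin d)) 22).finite_cover_balls (e := 1 / 4)
      (by norm_num)
  refine ⟨htf.toFinset.card, fun Q hQ q r hr T hT hsep => ?_⟩
  obtain ⟨φ, -, hφ, -⟩ := hQ.exists_isometry
  have h1 : ∀ p ∈ T, ∃ c ∈ htf.toFinset, dist (r⁻¹ • φ (p - q)) c < 1 / 4 := by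
    intro p hp
    have : r⁻¹ • φ (p - q) ∈ closedBall (0 : EuclideanSpace ℝ (Fin d)) 22 := by
      rw [mem_closedBall_zero_iff, norm_smul, hφ, norm_inv, Real.norm_of_nonneg hr.le,
        inv_mul_le_iff₀ hr, mul_comm]
      exact (hQ.norm_apply_le _).trans (hT p hp)
    obtain ⟨c, hc, hpc⟩ := mem_iUnion₂.1 (hcov this)
    exact ⟨c, htf.mem_toFinset.2 hc, hpc⟩
  choose! c hc hpc using h1
  refine Finset.card_le_card_of_injOn c hc fun p hp p' hp' hpp => ?_
  by_contra hne
  have h2 := hsep p hp p' hp' hne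
  have h3 : dist (r⁻¹ • φ (p - q)) (r⁻¹ • φ (p' - q)) < 1 / 2 := by
    have a1 := hpc p hp
    have a2 := hpc p' hp'
    rw [← hpp] at a2
    have := dist_triangle_right (r⁻¹ • φ (p - q)) (r⁻¹ • φ (p' - q)) (c p)
    linarith
  rw [dist_eq_norm, ← smul_sub, ← map_sub, sub_sub_sub_cancel_right, norm_smul, hφ, norm_inv,
    Real.norm_of_nonneg hr.le, inv_mul_lt_iff₀ hr] at h3
  linarith

theorem Set.exists_finset_of_card_le {α : Type*} {s : Set α} {N : ℕ}
    (h : ∀ T : Finset α, (T : Set α) ⊆ s → T.card ≤ N) :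
    ∃ T : Finset α, (T : Set α) = s ∧ T.card ≤ N := by
  have hf : s.Finite := by
    by_contra hinf
    obtain ⟨T, hT, hc⟩ := Set.Infinite.exists_subset_card_eq hinf (N + 1)
    have := h T hT
    omega
  exact ⟨hf.toFinset, hf.coe_toFinset, h _ hf.coe_toFinset.subset⟩

/-- A separated set which is flat in balls has few points in balls. -/
theorem exists_finset_of_flat {d N : ℕ}
    (hN : ∀ Q : H →L[ℝ] H, IsDProj d Q → ∀ (q : H) (r : ℝ), 0 < r → ∀ T : Finset H,
      (∀ p ∈ T, ‖p - q‖ ≤ 22 * r) →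
      (∀ p ∈ T, ∀ p' ∈ T, p ≠ p' → r / 2 ≤ ‖Q (p - p')‖) → T.card ≤ N)
    {X : Set H} {Q : H → H →L[ℝ] H} {r δ : ℝ} (hr : 0 < r) (hδ : δ ≤ 1 / 4)
    (hQ : ∀ p ∈ X, IsDProj d (Q p)) (hsep : ∀ p ∈ X, ∀ q ∈ X, p ≠ q → r ≤ ‖p - q‖)
    (hflat : ∀ p ∈ X, ∀ q ∈ X, ‖q - p‖ ≤ 100 * r → ‖(q - p) - Q p (q - p)‖ ≤ δ * r) (y : H) :
    ∃ T : Finset H, (T : Set H) = X ∩ closedBall y (11 * r) ∧ T.card ≤ N := by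
  refine Set.exists_finset_of_card_le fun T hT => ?_
  rcases T.eq_empty_or_nonempty with rfl | ⟨q, hq⟩
  · simp
  have h22 : ∀ p ∈ T, ‖p - q‖ ≤ 22 * r := fun p hp => by
    rw [← dist_eq_norm]
    have h1 : dist p y ≤ 11 * r := (hT hp).2
    have h2 : dist q y ≤ 11 * r := (hT hq).2
    linarith [dist_triangle_right p q y]
  refine hN (Q q) (hQ q (hT hq).1) q r hr T h22 fun p hp p' hp' hne => ?_
  have h1 := hflat q (hT hq).1 p (hT hp).1 (by linarith [h22 p hp])
  have h2 := hflat q (hT hq).1 p' (hT hp').1 (by linarith [h22 p' hp'])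
  have h3 := hsep p (hT hp).1 p' (hT hp').1 hne
  have e : p - p' = Q q (p - p') + (((p - q) - Q q (p - q)) - ((p' - q) - Q q (p' - q))) := by
    simp only [map_sub]; abel
  have h4 := norm_add_le (Q q (p - p')) (((p - q) - Q q (p - q)) - ((p' - q) - Q q (p' - q)))
  rw [← e] at h4
  have h5 := norm_sub_le ((p - q) - Q q (p - q)) ((p' - q) - Q q (p' - q))
  have : δ * r ≤ 1 / 4 * r := mul_le_mul_of_nonneg_right hδ hr.le
  linarith

end

section
variable {H : Type*} [NormedAddCommGroup H]

/-- A bump function equal to `1` on the ball of radius `9 * r` about `q` and supported in the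
ball of radius `10 * r`. -/
noncomputable def ballBump (r : ℝ) (q y : H) : ℝ := max 0 (min 1 (10 - ‖y - q‖ / r))

theorem ballBump_nonneg (r : ℝ) (q y : H) : 0 ≤ ballBump r q y := le_max_left _ _

theorem le_of_ballBump_ne_zero {r : ℝ} (hr : 0 < r) {q y : H} (h : ballBump r q y ≠ 0) :
    ‖y - q‖ ≤ 10 * r := by
  by_contra! hlt
  refine h (max_eq_left ((min_le_right _ _).trans ?_))
  rw [sub_nonpos, le_div_iff₀ hr]
  exact hlt.le

theorem ballBump_eq_one {r : ℝ} (hr : 0 < r) {q y : H} (h : ‖y - q‖ ≤ 9 * r) :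
    ballBump r q y = 1 := by
  have : ‖y - q‖ / r ≤ 9 := by rwa [div_le_iff₀ hr]
  rw [ballBump, min_eq_left (by linarith), max_eq_right zero_le_one]

theorem abs_ballBump_sub_le {r : ℝ} (hr : 0 < r) (q u v : H) :
    |ballBump r q u - ballBump r q v| ≤ ‖u - v‖ / r := by
  have h1 := abs_max_sub_max_le_abs (min 1 (10 - ‖u - q‖ / r)) (min 1 (10 - ‖v - q‖ / r)) 0
  have h2 := abs_min_sub_min_le_max 1 (10 - ‖u - q‖ / r) 1 (10 - ‖v - q‖ / r)
  rw [sub_self, abs_zero, max_eq_right (abs_nonneg _)] at h2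
  have h3 : |10 - ‖u - q‖ / r - (10 - ‖v - q‖ / r)| ≤ ‖u - v‖ / r := by
    have e : 10 - ‖u - q‖ / r - (10 - ‖v - q‖ / r) = (‖v - q‖ - ‖u - q‖) / r := by ring
    rw [e, abs_div, abs_of_pos hr]
    refine div_le_div_of_nonneg_right ?_ hr.le
    have := abs_norm_sub_norm_le (v - q) (u - q)
    rwa [sub_sub_sub_cancel_right, norm_sub_rev v u] at this
  rw [ballBump, ballBump, max_comm 0, max_comm 0]
  exact h1.trans (h2.trans h3)

/-- A partition of unity subordinate to the balls of radius `10 * r` about the points of `X`. -/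
noncomputable def ballWeight (X : Set H) (r : ℝ) (q y : H) : ℝ :=
  ballBump r q y / max 1 (∑ᶠ p ∈ X, ballBump r p y)

theorem ballWeight_nonneg (X : Set H) (r : ℝ) (q y : H) : 0 ≤ ballWeight X r q y :=
  div_nonneg (ballBump_nonneg _ _ _) (zero_le_one.trans (le_max_left _ _))

theorem le_of_ballWeight_ne_zero {X : Set H} {r : ℝ} (hr : 0 < r) {q y : H}
    (h : ballWeight X r q y ≠ 0) : ‖y - q‖ ≤ 10 * r :=
  le_of_ballBump_ne_zero hr fun h0 => h (by rw [ballWeight, h0, zero_div])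

section
variable {X : Set H} {r : ℝ} {T : Finset H} {y u v : H}

theorem finsum_mem_eq_sum_of_closedBall {M : Type*} [AddCommMonoid M]
    (hT : (T : Set H) = X ∩ closedBall y (11 * r)) (hu : ‖u - y‖ ≤ r) (g : H → M)
    (hg : ∀ q, g q ≠ 0 → ‖u - q‖ ≤ 10 * r) : ∑ᶠ q ∈ X, g q = ∑ q ∈ T, g q := by
  refine finsum_mem_eq_sum_of_inter_support_eq g ?_
  ext q
  rw [hT]
  constructor
  · rintro ⟨hq, hs⟩
    refine ⟨⟨hq, ?_⟩, hs⟩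
    have := hg q hs
    rw [mem_closedBall, dist_eq_norm, norm_sub_rev, ← sub_sub_sub_cancel_left _ _ u]
    refine (norm_sub_le _ _).trans ?_
    linarith
  · rintro ⟨⟨hq, -⟩, hs⟩
    exact ⟨hq, hs⟩

theorem finsum_ballBump (hr : 0 < r) (hT : (T : Set H) = X ∩ closedBall y (11 * r))
    (hu : ‖u - y‖ ≤ r) : ∑ᶠ q ∈ X, ballBump r q u = ∑ q ∈ T, ballBump r q u :=
  finsum_mem_eq_sum_of_closedBall hT hu _ fun _ => le_of_ballBump_ne_zero hr

theorem sum_ballWeight_le_one (hr : 0 < r) (hT : (T : Set H) = X ∩ closedBall y (11 * r))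
    (hu : ‖u - y‖ ≤ r) : ∑ q ∈ T, ballWeight X r q u ≤ 1 := by
  simp only [ballWeight]
  rw [← Finset.sum_div, finsum_ballBump hr hT hu, div_le_one (lt_max_of_lt_left one_pos)]
  exact le_max_right _ _

theorem sum_ballWeight_eq_one (hr : 0 < r) (hT : (T : Set H) = X ∩ closedBall y (11 * r))
    (hu : ‖u - y‖ ≤ r) {p : H} (hp : p ∈ X) (hup : ‖u - p‖ ≤ 9 * r) :
    ∑ q ∈ T, ballWeight X r q u = 1 := by
  have hpT : p ∈ T := by
    rw [← Finset.mem_coe, hT]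
    refine ⟨hp, ?_⟩
    rw [mem_closedBall, dist_eq_norm, norm_sub_rev, ← sub_sub_sub_cancel_left _ _ u]
    refine (norm_sub_le _ _).trans ?_
    linarith
  have h1 : 1 ≤ ∑ q ∈ T, ballBump r q u := by
    rw [← ballBump_eq_one hr hup]
    exact Finset.single_le_sum (f := fun q => ballBump r q u) (fun q _ => ballBump_nonneg _ _ _) hpT
  simp only [ballWeight]
  rw [← Finset.sum_div, finsum_ballBump hr hT hu, max_eq_right h1, div_self (by linarith)]

theorem sum_abs_ballWeight_sub_le {N : ℕ} (hr : 0 < r)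
    (hT : (T : Set H) = X ∩ closedBall y (11 * r)) (hN : T.card ≤ N)
    (hu : ‖u - y‖ ≤ r) (hv : ‖v - y‖ ≤ r) :
    ∑ q ∈ T, |ballWeight X r q u - ballWeight X r q v| ≤ 2 * N * (‖u - v‖ / r) := by
  have h0 : ∑ q ∈ T, |ballBump r q u - ballBump r q v| ≤ N * (‖u - v‖ / r) := by
    refine (Finset.sum_le_card_nsmul _ _ _ fun q _ => abs_ballBump_sub_le hr q u v).trans ?_
    rw [nsmul_eq_mul]
    exact mul_le_mul_of_nonneg_right (by exact_mod_cast hN) (by positivity)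
  simp only [ballWeight]
  rw [finsum_ballBump hr hT hu, finsum_ballBump hr hT hv]
  set s := ∑ q ∈ T, ballBump r q u with hs
  set t := ∑ q ∈ T, ballBump r q v with ht
  have ht0 : 0 ≤ t := Finset.sum_nonneg fun q _ => ballBump_nonneg _ _ _
  set m := max 1 s
  set n := max 1 t
  have hm : 1 ≤ m := le_max_left _ _
  have hn : 1 ≤ n := le_max_left _ _
  have hmn : |m - n| ≤ N * (‖u - v‖ / r) := by
    have h2 := abs_max_sub_max_le_max 1 s 1 t
    rw [sub_self, abs_zero, max_eq_right (abs_nonneg (s - t))] at h2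
    refine h2.trans (le_trans ?_ h0)
    rw [hs, ht, ← Finset.sum_sub_distrib]
    exact Finset.abs_sum_le_sum_abs _ _
  have hterm : ∀ q ∈ T, |ballBump r q u / m - ballBump r q v / n| ≤
      |ballBump r q u - ballBump r q v| + ballBump r q v / n * |m - n| := by
    intro q _
    have hb := ballBump_nonneg r q v
    have hbn : 0 ≤ ballBump r q v / n := by positivity
    have e : ballBump r q u / m - ballBump r q v / n =
        ((ballBump r q u - ballBump r q v) - ballBump r q v / n * (m - n)) / m := by
      field_simp; ring
    rw [e, abs_div, abs_of_pos (by linarith : 0 < m)]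
    refine (div_le_self (abs_nonneg _) hm).trans ((abs_sub _ _).trans ?_)
    rw [abs_mul, abs_of_nonneg hbn]
  refine (Finset.sum_le_sum hterm).trans ?_
  rw [Finset.sum_add_distrib, ← Finset.sum_mul, ← Finset.sum_div]
  have h3 : t / n ≤ 1 := (div_le_one (by linarith)).2 (le_max_right _ _)
  have h4 := mul_le_mul_of_nonneg_right h3 (abs_nonneg (m - n))
  linarith

end

end

section
variable {H : Type*} [NormedAddCommGroup H] [InnerProductSpace ℝ H]

/-- The weighted average, near the points `q` of `X`, of the projections onto the planes through
`q` in the direction of the range of `Q q`; the identity away from `X`. -/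
noncomputable def netMap (X : Set H) (Q : H → H →L[ℝ] H) (r : ℝ) (y : H) : H :=
  y - ∑ᶠ q ∈ X, ballWeight X r q y • ((y - q) - Q q (y - q))

section
variable {X : Set H} {Q : H → H →L[ℝ] H} {r : ℝ} {T : Finset H} {y u v : H} {N : ℕ}

theorem netMap_eq (hr : 0 < r) (hT : (T : Set H) = X ∩ closedBall y (11 * r))
    (hu : ‖u - y‖ ≤ r) :
    netMap X Q r u = u - ∑ q ∈ T, ballWeight X r q u • ((u - q) - Q q (u - q)) := by
  rw [netMap, finsum_mem_eq_sum_of_closedBall hT hu]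
  intro q hq
  exact le_of_ballWeight_ne_zero hr fun h0 => hq (by rw [h0, zero_smul])

theorem norm_sum_ballWeight_smul_le (hr : 0 < r)
    (hT : (T : Set H) = X ∩ closedBall y (11 * r)) (hu : ‖u - y‖ ≤ r) {g : H → H} {β : ℝ}
    (hβ : 0 ≤ β) (hg : ∀ q ∈ T, ‖g q‖ ≤ β) : ‖∑ q ∈ T, ballWeight X r q u • g q‖ ≤ β := by
  have h1 : ‖∑ q ∈ T, ballWeight X r q u • g q‖ ≤ ∑ q ∈ T, ballWeight X r q u * β := by
    refine norm_sum_le_of_le _ fun q hq => ?_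
    rw [norm_smul, Real.norm_of_nonneg (ballWeight_nonneg _ _ _ _)]
    exact mul_le_mul_of_nonneg_left (hg q hq) (ballWeight_nonneg _ _ _ _)
  rw [← Finset.sum_mul] at h1
  exact h1.trans (mul_le_of_le_one_left hβ (sum_ballWeight_le_one hr hT hu))

theorem norm_sum_ballWeight_smul_sub_le (hr : 0 < r)
    (hT : (T : Set H) = X ∩ closedBall y (11 * r)) (hN : T.card ≤ N) (hu : ‖u - y‖ ≤ r)
    (hv : ‖v - y‖ ≤ r) {g : H → H → H} {α β : ℝ} (hβ : 0 ≤ β)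
    (hα : 0 ≤ α) (hg : ∀ q ∈ T, ‖g q u - g q v‖ ≤ α * ‖u - v‖) (hgv : ∀ q ∈ T, ‖g q v‖ ≤ β * r) :
    ‖∑ q ∈ T, ballWeight X r q u • g q u - ∑ q ∈ T, ballWeight X r q v • g q v‖ ≤
      (2 * N * β + α) * ‖u - v‖ := by
  have e : ∑ q ∈ T, ballWeight X r q u • g q u - ∑ q ∈ T, ballWeight X r q v • g q v =
      ∑ q ∈ T, ballWeight X r q u • (g q u - g q v) +
        ∑ q ∈ T, (ballWeight X r q u - ballWeight X r q v) • g q v := by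
    rw [← Finset.sum_sub_distrib, ← Finset.sum_add_distrib]
    refine Finset.sum_congr rfl fun q _ => ?_
    rw [smul_sub, sub_smul]; abel
  have h1 := norm_sum_ballWeight_smul_le hr hT hu (g := fun q => g q u - g q v)
    (mul_nonneg hα (norm_nonneg _)) hg
  have h2 : ‖∑ q ∈ T, (ballWeight X r q u - ballWeight X r q v) • g q v‖ ≤
      ∑ q ∈ T, |ballWeight X r q u - ballWeight X r q v| * (β * r) := by
    refine norm_sum_le_of_le _ fun q hq => ?_
    rw [norm_smul, Real.norm_eq_abs]
    exact mul_le_mul_of_nonneg_left (hgv q hq) (abs_nonneg _)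
  rw [← Finset.sum_mul] at h2
  have h3 := mul_le_mul_of_nonneg_right (sum_abs_ballWeight_sub_le hr hT hN hu hv)
    (mul_nonneg hβ hr.le)
  have h4 : 2 * N * (‖u - v‖ / r) * (β * r) = 2 * N * β * ‖u - v‖ := by field_simp
  rw [e]
  refine (norm_add_le _ _).trans ?_
  linarith

end

/-- A separated family of points with almost parallel planes through them, at a single scale. -/
structure IsFlatNet (d N : ℕ) (X : Set H) (Q : H → H →L[ℝ] H) (r δ : ℝ) : Prop where
  proj : ∀ p ∈ X, IsDProj d (Q p)
  card_le : ∀ y, ∃ T : Finset H, (T : Set H) = X ∩ closedBall y (11 * r) ∧ T.card ≤ N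
  angle : ∀ p ∈ X, ∀ q ∈ X, ‖q - p‖ ≤ 100 * r → ‖Q p - Q q‖ ≤ δ
  flat : ∀ p ∈ X, ∀ q ∈ X, ‖q - p‖ ≤ 100 * r → ‖(q - p) - Q p (q - p)‖ ≤ δ * r

/-- Compatibility of a net at scale `r / 10` with a net at scale `r`. -/
structure IsNextNet (X X' : Set H) (Q Q' : H → H →L[ℝ] H) (r δ : ℝ) : Prop where
  parent : ∀ q ∈ X', ∃ p ∈ X, ‖q - p‖ ≤ 2 * r
  angle : ∀ p ∈ X, ∀ q ∈ X', ‖q - p‖ ≤ 100 * r → ‖Q p - Q' q‖ ≤ δ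
  flat : ∀ p ∈ X, ∀ q ∈ X', ‖q - p‖ ≤ 100 * r → ‖(q - p) - Q p (q - p)‖ ≤ δ * r

/-- The set `S` is flat at scale `r`, and well approximated near `X` by the planes given
by `Q`. -/
structure IsStage (d : ℕ) (X : Set H) (Q : H → H →L[ℝ] H) (r a b : ℝ) (S : Set H) : Prop where
  graph : ∀ y ∈ S, ∃ R, IsDProj d R ∧ IsGraph S y R b r
  dist_le : ∀ y ∈ S, ∀ p ∈ X, ‖y - p‖ ≤ 11 * r → ‖(y - p) - Q p (y - p)‖ ≤ a * r
  graph_net : ∀ y ∈ S, ∀ p ∈ X, ‖y - p‖ ≤ 11 * r → IsGraph S y (Q p) a r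
  near : ∀ p ∈ X, ∃ y ∈ S, ‖y - p‖ ≤ r

theorem mem_of_mem_closedBall_of_eq {H : Type*} [NormedAddCommGroup H] {X : Set H} {r : ℝ}
    {T : Finset H} {y q : H} (hT : (T : Set H) = X ∩ closedBall y (11 * r)) (hq : q ∈ T) :
    q ∈ X ∧ ‖y - q‖ ≤ 11 * r := by
  rw [← Finset.mem_coe, hT] at hq
  refine ⟨hq.1, ?_⟩
  rw [← dist_eq_norm, dist_comm]
  exact hq.2

namespace IsFlatNet
variable {d N : ℕ} {X : Set H} {Q : H → H →L[ℝ] H} {r δ : ℝ} {y p u v : H}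

theorem netMap_eq_self (h : IsFlatNet d N X Q r δ) (hr : 0 < r)
    (hy : ∀ q ∈ X, 11 * r < ‖y - q‖) (hu : ‖u - y‖ ≤ r) : netMap X Q r u = u := by
  obtain ⟨T, hT, -⟩ := h.card_le y
  have : T = ∅ := Finset.eq_empty_of_forall_notMem fun q hq =>
    absurd (mem_of_mem_closedBall_of_eq hT hq).2
      (not_le.2 (hy q (mem_of_mem_closedBall_of_eq hT hq).1))
  rw [netMap_eq hr hT hu, this, Finset.sum_empty, sub_zero]

/-- Near `p ∈ X` the averaged projection is close to the projection onto the plane at `p`. -/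
theorem netMap_near (h : IsFlatNet d N X Q r δ) (hr : 0 < r) (hδ : 0 ≤ δ) (hp : p ∈ X)
    (hy : ‖y - p‖ ≤ 8 * r) (hu : ‖u - y‖ ≤ r) (hv : ‖v - y‖ ≤ r) :
    ‖(netMap X Q r u - netMap X Q r v) - Q p (u - v)‖ ≤ (26 * N + 1) * δ * ‖u - v‖ ∧
      ‖(netMap X Q r u - p) - Q p (netMap X Q r u - p)‖ ≤ 13 * δ * r := by
  obtain ⟨T, hT, hTN⟩ := h.card_le y
  set g : H → H → H := fun q u => ((u - q) - Q q (u - q)) - ((u - p) - Q p (u - p)) with hg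
  have hpq : ∀ q ∈ T, q ∈ X ∧ ‖y - q‖ ≤ 11 * r ∧ ‖Q p - Q q‖ ≤ δ ∧
      ‖(q - p) - Q p (q - p)‖ ≤ δ * r := by
    intro q hq
    obtain ⟨hqX, hyq⟩ := mem_of_mem_closedBall_of_eq hT hq
    have : ‖q - p‖ ≤ 100 * r := by
      have := norm_sub_le (y - p) (y - q)
      rw [sub_sub_sub_cancel_left] at this
      linarith
    exact ⟨hqX, hyq, h.angle p hp q hqX this, h.flat p hp q hqX this⟩
  have hsum : ∀ u, ‖u - y‖ ≤ r → netMap X Q r u =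
      u - ((u - p) - Q p (u - p)) - ∑ q ∈ T, ballWeight X r q u • g q u := by
    intro u hu
    have hup : ‖u - p‖ ≤ 9 * r := by
      rw [← sub_add_sub_cancel u y p]
      exact (norm_add_le _ _).trans (by linarith)
    simp only [hg, smul_sub (ballWeight X r _ u) (_ - Q _ _) (u - p - Q p (u - p)),
      Finset.sum_sub_distrib, ← Finset.sum_smul]
    rw [netMap_eq hr hT hu, sum_ballWeight_eq_one hr hT hu hp hup, one_smul]
    abel
  have hQd : ∀ q ∈ T, ∀ x, ‖Q p x - Q q x‖ ≤ δ * ‖x‖ := fun q hq x => by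
    rw [← sub_apply]
    exact ((Q p - Q q).le_opNorm x).trans
      (mul_le_mul_of_nonneg_right (hpq q hq).2.2.1 (norm_nonneg _))
  have hgd : ∀ q ∈ T, ∀ u v, ‖g q u - g q v‖ ≤ δ * ‖u - v‖ := by
    intro q hq u v
    have e : g q u - g q v = Q p (u - v) - Q q (u - v) := by
      simp only [hg, map_sub]; abel
    rw [e]
    exact hQd q hq _
  have hgn : ∀ q ∈ T, ∀ u, ‖u - y‖ ≤ r → ‖g q u‖ ≤ 13 * δ * r := by
    intro q hq u hu
    have e : g q u = (Q p (u - q) - Q q (u - q)) - ((q - p) - Q p (q - p)) := by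
      simp only [hg, map_sub]; abel
    have huq : ‖u - q‖ ≤ 12 * r := by
      rw [← sub_add_sub_cancel u y q]
      exact (norm_add_le _ _).trans (by linarith [(hpq q hq).2.1])
    rw [e]
    refine (norm_sub_le _ _).trans ?_
    have h1 := hQd q hq (u - q)
    have h2 := mul_le_mul_of_nonneg_left huq hδ
    linarith [(hpq q hq).2.2.2]
  constructor
  · have h1 := norm_sum_ballWeight_smul_sub_le hr hT hTN hu hv (g := g) (α := δ) (β := 13 * δ)
      (by positivity) hδ (fun q hq => hgd q hq u v) (fun q hq => hgn q hq v hv)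
    have e : (netMap X Q r u - netMap X Q r v) - Q p (u - v) =
        -(∑ q ∈ T, ballWeight X r q u • g q u - ∑ q ∈ T, ballWeight X r q v • g q v) := by
      rw [hsum u hu, hsum v hv]
      simp only [map_sub]; abel
    rw [e, norm_neg]
    refine h1.trans (le_of_eq ?_)
    ring
  · have h1 := norm_sum_ballWeight_smul_le hr hT hu (g := fun q => g q u) (β := 13 * δ * r)
      (by positivity) fun q hq => hgn q hq u hu
    have e : netMap X Q r u - p = Q p (u - p) - ∑ q ∈ T, ballWeight X r q u • g q u := by
      rw [hsum u hu]; abel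
    set s := ∑ q ∈ T, ballWeight X r q u • g q u
    have e2 : (netMap X Q r u - p) - Q p (netMap X Q r u - p) = -(s - Q p s) := by
      rw [e, map_sub (Q p) (Q p (u - p)) s, (h.proj p hp).idem]; abel
    rw [e2, norm_neg]
    exact ((h.proj p hp).norm_sub_apply_le s).trans h1

end IsFlatNet

namespace IsStage
variable {d N : ℕ} {X X' S : Set H} {Q Q' : H → H →L[ℝ] H} {r δ a b : ℝ} {y u v : H}

theorem norm_netMap_sub_le (h : IsStage d X Q r a b S) (hX : IsFlatNet d N X Q r δ) (hr : 0 < r)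
    (ha : 0 ≤ a) (hu : u ∈ S) : ‖netMap X Q r u - u‖ ≤ a * r := by
  obtain ⟨T, hT, -⟩ := hX.card_le u
  have huu : ‖u - u‖ ≤ r := by simpa using hr.le
  rw [netMap_eq hr hT huu, sub_sub_cancel_left, norm_neg]
  refine norm_sum_ballWeight_smul_le hr hT huu (by positivity) fun q hq => ?_
  obtain ⟨hqX, huq⟩ := mem_of_mem_closedBall_of_eq hT hq
  exact h.dist_le u hu q hqX huq

theorem norm_netMap_sub_sub_le (h : IsStage d X Q r a b S) (hX : IsFlatNet d N X Q r δ)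
    (hr : 0 < r) (ha : 0 ≤ a) (hy : y ∈ S) (hu : u ∈ S) (hv : v ∈ S) (huy : ‖u - y‖ ≤ r)
    (hvy : ‖v - y‖ ≤ r) :
    ‖(netMap X Q r u - netMap X Q r v) - (u - v)‖ ≤ (4 * N + 1) * a * ‖u - v‖ := by
  obtain ⟨T, hT, hTN⟩ := hX.card_le y
  rw [netMap_eq hr hT huy, netMap_eq hr hT hvy, sub_sub_sub_comm, sub_sub_cancel_left,
    sub_sub_cancel_left, ← neg_sub_neg, neg_neg, neg_neg, norm_sub_rev]
  have key : ∀ q ∈ T, ∀ u ∈ S, ∀ v ∈ S, ‖u - y‖ ≤ r → ‖v - y‖ ≤ r →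
      ‖((u - q) - Q q (u - q)) - ((v - q) - Q q (v - q))‖ ≤ a * ‖u - v‖ := by
    intro q hq u hu v hv huy hvy
    obtain ⟨hqX, hyq⟩ := mem_of_mem_closedBall_of_eq hT hq
    have := (h.graph_net y hy q hqX hyq).cone u hu v hv (by rw [dist_eq_norm]; linarith)
      (by rw [dist_eq_norm]; linarith)
    have e : ((u - q) - Q q (u - q)) - ((v - q) - Q q (v - q)) = (u - v) - Q q (u - v) := by
      simp only [map_sub]; abel
    rwa [e]
  refine (norm_sum_ballWeight_smul_sub_le hr hT hTN huy hvy
    (g := fun q u => (u - q) - Q q (u - q)) (α := a) (β := 2 * a) (by positivity) ha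
    (fun q hq => key q hq u hu v hv huy hvy) fun q hq => ?_).trans (le_of_eq (by ring))
  obtain ⟨hqX, hyq⟩ := mem_of_mem_closedBall_of_eq hT hq
  have h1 := h.dist_le y hy q hqX hyq
  have h2 := key q hq v hv y hy hvy (by simpa using hr.le)
  have h3 := norm_add_le (((v - q) - Q q (v - q)) - ((y - q) - Q q (y - q)))
    ((y - q) - Q q (y - q))
  rw [sub_add_cancel] at h3
  have h4 := mul_le_mul_of_nonneg_left hvy ha
  linarith

end IsStage

theorem norm_apply_sub_apply_le {Q Q' : H →L[ℝ] H} {δ : ℝ} (h : ‖Q - Q'‖ ≤ δ) (x : H) :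
    ‖Q x - Q' x‖ ≤ δ * ‖x‖ := by
  rw [← sub_apply]
  exact ((Q - Q').le_opNorm x).trans (mul_le_mul_of_nonneg_right h (norm_nonneg _))

theorem norm_le_two_mul_of_norm_sub_le {H : Type*} [NormedAddCommGroup H] {x y : H} {η : ℝ}
    (hη : η ≤ 1 / 2) (h : ‖x - y‖ ≤ η * ‖y‖) : ‖y‖ ≤ 2 * ‖x‖ := by
  have h1 := norm_sub_norm_le y x
  rw [norm_sub_rev] at h1
  have h2 := mul_le_mul_of_nonneg_right hη (norm_nonneg y)
  linarith

/-- The averaging map turns a stage at scale `r` into a stage at scale `r / 10`. -/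
theorem IsStage.next {d N : ℕ} {X X' S : Set H} {Q Q' : H → H →L[ℝ] H} {r δ a b : ℝ}
    (h : IsStage d X Q r a b S) (hX : IsFlatNet d N X Q r δ)
    (hX' : ∀ q ∈ X', IsDProj d (Q' q)) (hn : IsNextNet X X' Q Q' r δ)
    (hr : 0 < r) (hδ : 0 ≤ δ) (ha : (52 * N + 160) * δ ≤ a) (hab : (8 * N + 4) * a ≤ b)
    (hb : b ≤ 1 / 100) : IsStage d X' Q' (r / 10) a b (netMap X Q r '' S) := by
  have hNδ : 0 ≤ N * δ := by positivity
  have ha0 : 0 ≤ a := by linarith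
  have hNa : 0 ≤ N * a := by positivity
  have hδa : 160 * δ ≤ a := by linarith
  have har : a * r ≤ 1 / 400 * r := mul_le_mul_of_nonneg_right (by linarith) hr.le
  have hδr : 160 * (δ * r) ≤ a * r := by
    rw [← mul_assoc]; exact mul_le_mul_of_nonneg_right hδa hr.le
  have hδr0 : 0 ≤ δ * r := by positivity
  set σ := netMap X Q r with hσdef
  have hση : ∀ y ∈ S, ∀ u ∈ S, ∀ v ∈ S, dist u y ≤ r → dist v y ≤ r →
      ‖(σ u - σ v) - (u - v)‖ ≤ (4 * N + 1) * a * ‖u - v‖ := by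
    intro y hy u hu v hv huy hvy
    rw [dist_eq_norm] at huy hvy
    exact h.norm_netMap_sub_sub_le hX hr ha0 hy hu hv huy hvy
  have hη : (4 * N + 1) * a ≤ 1 / 200 := by linarith
  have hσ : ∀ y ∈ S, ∀ u ∈ S, ∀ v ∈ S, dist u y ≤ r → dist v y ≤ r →
      ‖(σ u - σ v) - (u - v)‖ ≤ 1 / 100 * ‖u - v‖ :=
    fun y hy u hu v hv huy hvy => (hση y hy u hu v hv huy hvy).trans
      (mul_le_mul_of_nonneg_right (by linarith) (norm_nonneg _))
  have hσ2 : ∀ y ∈ S, ∀ u ∈ S, ∀ v ∈ S, dist u y ≤ r → dist v y ≤ r →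
      ‖u - v‖ ≤ 2 * ‖σ u - σ v‖ := fun y hy u hu v hv huy hvy =>
    norm_le_two_mul_of_norm_sub_le (by norm_num) (hσ y hy u hu v hv huy hvy)
  have hσa : ∀ u ∈ S, ‖σ u - u‖ ≤ a * r := fun u hu => h.norm_netMap_sub_le hX hr ha0 hu
  have hσi : ∀ u ∈ S, ‖σ u - u‖ ≤ 1 / 10 * r := fun u hu => (hσa u hu).trans (by linarith)
  have hpar : ∀ y ∈ S, ∀ q ∈ X', ‖σ y - q‖ ≤ 11 * (r / 10) →
      ∃ p ∈ X, ‖q - p‖ ≤ 2 * r ∧ ‖y - p‖ ≤ 8 * r := by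
    intro y hy q hq hyq
    obtain ⟨p, hp, hqp⟩ := hn.parent q hq
    refine ⟨p, hp, hqp, ?_⟩
    have e : y - p = (σ y - q) + (q - p) - (σ y - y) := by abel
    rw [e]
    refine (norm_sub_le _ _).trans ?_
    linarith [norm_add_le (σ y - q) (q - p), hσi y hy]
  refine ⟨?_, ?_, ?_, ?_⟩
  · rintro _ ⟨y, hy, rfl⟩
    by_cases hyX : ∃ p ∈ X, ‖y - p‖ ≤ 11 * r
    · obtain ⟨p, hp, hyp⟩ := hyX
      have hQp := hX.proj p hp
      have hg := h.graph_net y hy p hp hyp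
      refine ⟨Q p, hQp, hg.image hQp hQp (by rw [sub_self, norm_zero]; norm_num) hy hr
        (by linarith) (hσ y hy) hσi ?_⟩
      intro u hu v hv huy hvy
      have h1 := hg.cone u hu v hv (by linarith) (by linarith)
      have h2 := hQp.norm_sub_apply_le ((σ u - σ v) - (u - v))
      have h3 := hση y hy u hu v hv huy hvy
      have e : (σ u - σ v) - Q p (σ u - σ v) = ((u - v) - Q p (u - v)) +
          (((σ u - σ v) - (u - v)) - Q p ((σ u - σ v) - (u - v))) := by
        rw [map_sub (Q p) (σ u - σ v) (u - v)]; abel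
      have h4 := hσ2 y hy u hu v hv huy hvy
      rw [e]
      calc _ ≤ a * ‖u - v‖ + (4 * N + 1) * a * ‖u - v‖ :=
            (norm_add_le _ _).trans (by linarith)
        _ = (4 * N + 2) * a * ‖u - v‖ := by ring
        _ ≤ (4 * N + 2) * a * (2 * ‖σ u - σ v‖) :=
            mul_le_mul_of_nonneg_left h4 (by positivity)
        _ = (8 * N + 4) * a * ‖σ u - σ v‖ := by ring
        _ ≤ b * ‖σ u - σ v‖ := mul_le_mul_of_nonneg_right hab (norm_nonneg _)
    · push Not at hyX
      obtain ⟨R, hR, hg⟩ := h.graph y hy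
      refine ⟨R, hR, hg.image hR hR (by rw [sub_self, norm_zero]; norm_num) hy hr hb
        (hσ y hy) hσi ?_⟩
      intro u hu v hv huy hvy
      have hu' : σ u = u := hX.netMap_eq_self hr hyX (by rwa [← dist_eq_norm])
      have hv' : σ v = v := hX.netMap_eq_self hr hyX (by rwa [← dist_eq_norm])
      rw [hu', hv']
      exact hg.cone u hu v hv (by linarith) (by linarith)
  · rintro _ ⟨y, hy, rfl⟩ q hq hyq
    obtain ⟨p, hp, hqp, hyp⟩ := hpar y hy q hq hyq
    have h1 := (hX.netMap_near hr hδ hp hyp (u := y) (v := y) (by simpa using hr.le)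
      (by simpa using hr.le)).2
    rw [← hσdef] at h1
    have h2 := hn.flat p hp q hq (by linarith)
    have h3 := norm_apply_sub_apply_le (hn.angle p hp q hq (by linarith)) (σ y - q)
    have h4 := mul_le_mul_of_nonneg_left hyq hδ
    have e : (σ y - q) - Q' q (σ y - q) = (Q p (σ y - q) - Q' q (σ y - q)) +
        ((σ y - p) - Q p (σ y - p)) - ((q - p) - Q p (q - p)) := by
      simp only [map_sub]; abel
    rw [e]
    refine (norm_sub_le _ _).trans ?_
    linarith [norm_add_le (Q p (σ y - q) - Q' q (σ y - q)) ((σ y - p) - Q p (σ y - p))]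
  · rintro _ ⟨y, hy, rfl⟩ q hq hyq
    obtain ⟨p, hp, hqp, hyp⟩ := hpar y hy q hq hyq
    have hang := hn.angle p hp q hq (by linarith)
    refine (h.graph_net y hy p hp (by linarith)).image (hX.proj p hp) (hX' q hq)
      (hang.trans (by linarith)) hy hr (by linarith) (hσ y hy) hσi ?_
    intro u hu v hv huy hvy
    have h1 := (hX.netMap_near hr hδ hp hyp (u := u) (v := v) (by rwa [← dist_eq_norm])
      (by rwa [← dist_eq_norm])).1
    rw [← hσdef] at h1
    have h2 := norm_apply_sub_apply_le hang (Q p (u - v))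
    have h3 := mul_le_mul_of_nonneg_left ((hX.proj p hp).norm_apply_le (u - v)) hδ
    have h4 := (hX' q hq).norm_sub_apply_le ((σ u - σ v) - Q p (u - v))
    have h5 := hσ2 y hy u hu v hv huy hvy
    have e : (σ u - σ v) - Q' q (σ u - σ v) =
        (((σ u - σ v) - Q p (u - v)) - Q' q ((σ u - σ v) - Q p (u - v))) +
        (Q p (Q p (u - v)) - Q' q (Q p (u - v))) := by
      rw [(hX.proj p hp).idem, map_sub (Q' q) (σ u - σ v) (Q p (u - v))]; abel
    rw [e]
    calc _ ≤ (26 * N + 1) * δ * ‖u - v‖ + δ * ‖u - v‖ :=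
          (norm_add_le _ _).trans (by linarith)
      _ = (26 * N + 2) * δ * ‖u - v‖ := by ring
      _ ≤ (26 * N + 2) * δ * (2 * ‖σ u - σ v‖) :=
          mul_le_mul_of_nonneg_left h5 (by positivity)
      _ = (52 * N + 4) * δ * ‖σ u - σ v‖ := by ring
      _ ≤ a * ‖σ u - σ v‖ := mul_le_mul_of_nonneg_right (by linarith) (norm_nonneg _)
  · intro q hq
    obtain ⟨p, hp, hqp⟩ := hn.parent q hq
    obtain ⟨y, hy, hyp⟩ := h.near p hp
    have hQp := hX.proj p hp
    have hyp' : ‖y - p‖ ≤ 11 * r := by linarith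
    have hg := h.graph_net y hy p hp hyp'
    have hqy : ‖q - y‖ ≤ 3 * r := by
      have := norm_sub_le (q - p) (y - p)
      rw [sub_sub_sub_cancel_right] at this
      linarith
    obtain ⟨u, hu, huy, huw⟩ := hg.full (Q p (q - y)) (hQp.idem _)
      ((hQp.norm_apply_le _).trans hqy)
    refine ⟨σ u, ⟨u, hu, rfl⟩, ?_⟩
    have h1 := hg.cone u hu y hy huy (by rw [dist_self]; positivity)
    rw [dist_eq_norm] at huy
    have h2 := mul_le_mul_of_nonneg_left huy ha0
    have h3 := h.dist_le y hy p hp hyp'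
    have h4 := hn.flat p hp q hq (by linarith)
    have e : u - q = ((u - y) - Q p (u - y)) + ((y - p) - Q p (y - p)) -
        ((q - p) - Q p (q - p)) := by
      rw [huw]; simp only [map_sub]; abel
    have h5 := norm_sub_le (((u - y) - Q p (u - y)) + ((y - p) - Q p (y - p)))
      ((q - p) - Q p (q - p))
    rw [← e] at h5
    have h6 := norm_add_le ((u - y) - Q p (u - y)) ((y - p) - Q p (y - p))
    have h7 := norm_add_le (σ u - u) (u - q)
    rw [sub_add_sub_cancel] at h7
    linarith [hσa u hu]

end

theorem radK_pos (k : ℕ) : 0 < radK k := by unfold radK; positivity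

theorem radK_zero : radK 0 = 1 := pow_zero _

theorem radK_succ (k : ℕ) : radK (k + 1) = radK k / 10 := by
  rw [radK, radK, pow_succ, div_eq_mul_inv]

theorem exists_radK_near {t : ℝ} (ht : 0 < t) (ht1 : t ≤ 1) :
    ∃ k, radK (k + 1) < t ∧ t ≤ radK k :=
  exists_nat_pow_near_of_lt_one ht ht1 (by norm_num) (by norm_num)

theorem exists_radK_lt {e : ℝ} (he : 0 < e) (K : ℕ) : ∃ k, K ≤ k ∧ radK k < e := by
  obtain ⟨n, hn⟩ := exists_pow_lt_of_lt_one he (by norm_num : (10 : ℝ)⁻¹ < 1)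
  exact ⟨max K n, le_max_left _ _,
    (pow_le_pow_of_le_one (by norm_num) (by norm_num) (le_max_right _ _)).trans_lt hn⟩

section
variable {H : Type*} [NormedAddCommGroup H]

/-- Successive maps move points and distort small distances little. -/
structure IsApprox (S : Set H) (F : ℕ → H → H) (b : ℝ) : Prop where
  zero : ∀ x, F 0 x = x
  move : ∀ k, ∀ x ∈ S, ‖F (k + 1) x - F k x‖ ≤ b * radK k
  lip : ∀ k, ∀ x ∈ S, ∀ y ∈ S, ‖F k x - F k y‖ ≤ radK k →
    ‖(F (k + 1) x - F (k + 1) y) - (F k x - F k y)‖ ≤ b * ‖F k x - F k y‖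

namespace IsApprox
variable {S : Set H} {F : ℕ → H → H} {b : ℝ} {x y : H}

theorem exists_limit [CompleteSpace H] (h : IsApprox S F b) :
    ∃ f : H → H, ∀ x ∈ S, ∀ k, ‖F k x - f x‖ ≤ 10 / 9 * b * radK k := by
  have : ∀ x ∈ S, ∃ z, ∀ k, ‖F k x - z‖ ≤ 10 / 9 * b * radK k := by
    intro x hx
    have hd : ∀ n, dist (F n x) (F (n + 1) x) ≤ b * (10 : ℝ)⁻¹ ^ n := fun n => by
      rw [dist_comm, dist_eq_norm]; exact h.move n x hx
    obtain ⟨z, hz⟩ := cauchySeq_tendsto_of_complete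
      (cauchySeq_of_le_geometric _ b (by norm_num) hd)
    refine ⟨z, fun k => ?_⟩
    have := dist_le_of_le_geometric_of_tendsto _ b (by norm_num) hd hz k
    rw [dist_eq_norm] at this
    refine this.trans (le_of_eq ?_)
    rw [radK]; ring
  choose! f hf using this
  exact ⟨f, hf⟩

theorem norm_sub_sub_le (h : IsApprox S F b) (hb : 0 ≤ b) (hx : x ∈ S) (hy : y ∈ S) (k : ℕ) :
    ‖(F (k + 1) x - F (k + 1) y) - (F k x - F k y)‖ ≤ 2 * b * ‖F k x - F k y‖ := by
  rcases le_total ‖F k x - F k y‖ (radK k) with hle | hle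
  · exact (h.lip k x hx y hy hle).trans
      (mul_le_mul_of_nonneg_right (by linarith) (norm_nonneg _))
  · rw [sub_sub_sub_comm]
    refine (norm_sub_le _ _).trans ?_
    have := mul_le_mul_of_nonneg_left hle hb
    linarith [h.move k x hx, h.move k y hy]

theorem norm_le (h : IsApprox S F b) (hb : 0 ≤ b) (hb1 : b ≤ 1 / 100) (hx : x ∈ S) (hy : y ∈ S)
    (k m : ℕ) : ‖F (k + m) x - F (k + m) y‖ ≤ 1.02 ^ m * ‖F k x - F k y‖ := by
  induction m with
  | zero => simp
  | succ m ih =>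
    have h1 := h.norm_sub_sub_le hb hx hy (k + m)
    have h2 := norm_sub_norm_le (F (k + m + 1) x - F (k + m + 1) y)
      (F (k + m) x - F (k + m) y)
    have h3 := mul_le_mul_of_nonneg_right (by linarith : 2 * b ≤ 0.02)
      (norm_nonneg (F (k + m) x - F (k + m) y))
    rw [pow_succ, ← add_assoc]
    linarith

theorem le_norm (h : IsApprox S F b) (hb : 0 ≤ b) (hb1 : b ≤ 1 / 100) (hx : x ∈ S) (hy : y ∈ S)
    (m : ℕ) : 0.98 ^ m * ‖x - y‖ ≤ ‖F m x - F m y‖ := by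
  induction m with
  | zero => simp [h.zero]
  | succ m ih =>
    have h1 := h.norm_sub_sub_le hb hx hy m
    have h2 := norm_sub_norm_le (F m x - F m y) (F (m + 1) x - F (m + 1) y)
    rw [norm_sub_rev (F m x - F m y)] at h2
    have h3 := mul_le_mul_of_nonneg_right (by linarith : 2 * b ≤ 0.02)
      (norm_nonneg (F m x - F m y))
    rw [pow_succ]
    linarith

variable {f : H → H}

theorem abs_norm_limit_sub_le (hb1 : b ≤ 1 / 100)
    (hf : ∀ x ∈ S, ∀ k, ‖F k x - f x‖ ≤ 10 / 9 * b * radK k) (hx : x ∈ S) (hy : y ∈ S) (k : ℕ) :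
    |‖f x - f y‖ - ‖F k x - F k y‖| ≤ 0.03 * radK k := by
  refine (abs_norm_sub_norm_le _ _).trans ?_
  rw [norm_sub_rev, sub_sub_sub_comm]
  refine (norm_sub_le _ _).trans ?_
  have := mul_le_mul_of_nonneg_right hb1 (radK_pos k).le
  linarith [hf x hx k, hf y hy k, radK_pos k]

theorem le_norm_limit (hb1 : b ≤ 1 / 100)
    (hf : ∀ x ∈ S, ∀ k, ‖F k x - f x‖ ≤ 10 / 9 * b * radK k) (hx : x ∈ S) (hy : y ∈ S) {k : ℕ}
    (hk : radK k ≤ ‖F k x - F k y‖) : 0.97 * ‖F k x - F k y‖ ≤ ‖f x - f y‖ := by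
  have := (abs_le.1 (abs_norm_limit_sub_le hb1 hf hx hy k)).1
  linarith

theorem norm_limit_le_sqrt (h : IsApprox S F b) (hb : 0 ≤ b) (hb1 : b ≤ 1 / 100)
    (hf : ∀ x ∈ S, ∀ k, ‖F k x - f x‖ ≤ 10 / 9 * b * radK k) (hx : x ∈ S) (hy : y ∈ S)
    (hxy : ‖x - y‖ ≤ 1) : ‖f x - f y‖ ≤ 10 * √‖x - y‖ := by
  rcases (norm_nonneg (x - y)).eq_or_lt with h0 | h0
  · rw [sub_eq_zero.1 (norm_eq_zero.1 h0.symm)]; simp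
  obtain ⟨k, hk1, hk2⟩ := exists_radK_near h0 hxy
  set t := ‖x - y‖ with ht
  have h1 := (abs_le.1 (abs_norm_limit_sub_le hb1 hf hx hy k)).2
  have h2 := h.norm_le hb hb1 hx hy 0 k
  rw [zero_add, h.zero, h.zero, ← ht] at h2
  rw [radK_succ] at hk1
  have hs1 : √t ≤ 1 := Real.sqrt_le_one.2 hxy
  have hst : √t * √t = t := Real.mul_self_sqrt h0.le
  have hs : √t ≤ (1.02⁻¹) ^ k := by
    rw [Real.sqrt_le_iff]
    refine ⟨by positivity, hk2.trans ?_⟩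
    rw [← pow_mul, mul_comm, pow_mul, radK]
    exact pow_le_pow_left₀ (by norm_num) (by norm_num) k
  have h3 : 1.02 ^ k * t ≤ √t := by
    calc (1.02 : ℝ) ^ k * t = (1.02 ^ k * √t) * √t := by rw [mul_assoc, hst]
      _ ≤ (1.02 ^ k * (1.02⁻¹) ^ k) * √t := by gcongr
      _ = √t := by rw [← mul_pow]; norm_num
  have h4 : t ≤ √t := by nlinarith [Real.sqrt_nonneg t]
  linarith

theorem exists_radK_le (h : IsApprox S F b) (hb : 0 ≤ b) (hb1 : b ≤ 1 / 100) (hx : x ∈ S)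
    (hy : y ∈ S) (hxy : x ≠ y) : ∃ n, radK n ≤ ‖F n x - F n y‖ := by
  by_contra! hlt
  have h0 : 0 < ‖x - y‖ := norm_pos_iff.2 (sub_ne_zero.2 hxy)
  obtain ⟨n, hn⟩ := exists_pow_lt_of_lt_one h0 (by norm_num : (0.98⁻¹ * 10⁻¹ : ℝ) < 1)
  have h1 := (h.le_norm hb hb1 hx hy n).trans_lt (hlt n)
  rw [mul_pow, inv_pow 0.98, inv_mul_lt_iff₀ (by positivity)] at hn
  exact lt_asymm hn h1

theorem mul_sqrt_le_norm_limit (h : IsApprox S F b) (hb : 0 ≤ b) (hb1 : b ≤ 1 / 100)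
    (hf : ∀ x ∈ S, ∀ k, ‖F k x - f x‖ ≤ 10 / 9 * b * radK k) (hx : x ∈ S) (hy : y ∈ S)
    (hxy : ‖x - y‖ ≤ 1) : 1 / 4 * (‖x - y‖ * √‖x - y‖) ≤ ‖f x - f y‖ := by
  rcases eq_or_ne x y with rfl | hne
  · simp
  have hex := h.exists_radK_le hb hb1 hx hy hne
  have hn := Nat.find_spec hex
  have hmin := fun m => Nat.find_min hex (m := m)
  set n := Nat.find hex
  have h1 := le_norm_limit hb1 hf hx hy hn
  have h2 := h.le_norm hb hb1 hx hy n
  set t := ‖x - y‖ with ht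
  have ht0 : 0 ≤ t := norm_nonneg _
  suffices hs : √t ≤ 2 * 0.98 ^ n by
    have := mul_le_mul_of_nonneg_left hs ht0
    linarith [norm_nonneg (F n x - F n y)]
  have hs1 : √t ≤ 1 := Real.sqrt_le_one.2 hxy
  rcases n with _ | m
  · norm_num; linarith
  have h3 := (h.le_norm hb hb1 hx hy m).trans_lt (not_le.1 (hmin m (Nat.lt_succ_self m)))
  rw [← ht] at h3
  have hs : √t ≤ 0.98 ^ m := by
    rw [Real.sqrt_le_iff]
    refine ⟨by positivity, ?_⟩
    have hp : (0 : ℝ) < 0.98 ^ m := by positivity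
    refine le_of_mul_le_mul_left (h3.le.trans ?_) hp
    rw [← pow_succ', ← pow_mul, mul_comm, pow_mul, radK]
    exact pow_le_pow_left₀ (by norm_num) (by norm_num) m
  rw [pow_succ]
  linarith [show (0 : ℝ) < 0.98 ^ m by positivity]

theorem injOn_limit (h : IsApprox S F b) (hb : 0 ≤ b) (hb1 : b ≤ 1 / 100)
    (hf : ∀ x ∈ S, ∀ k, ‖F k x - f x‖ ≤ 10 / 9 * b * radK k) : InjOn f S := by
  intro x hx y hy hxy
  by_contra hne
  obtain ⟨n, hn⟩ := h.exists_radK_le hb hb1 hx hy hne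
  have := le_norm_limit hb1 hf hx hy hn
  rw [hxy, sub_self, norm_zero] at this
  linarith [radK_pos n]

/-- The passage from a finite stage to the limit is uniformly continuous. -/
theorem exists_norm_limit_lt (h : IsApprox S F b) (hb : 0 ≤ b) (hb1 : b ≤ 1 / 100)
    (hf : ∀ x ∈ S, ∀ k, ‖F k x - f x‖ ≤ 10 / 9 * b * radK k) (k : ℕ) {e : ℝ} (he : 0 < e) :
    ∃ c > 0, ∀ x ∈ S, ∀ y ∈ S, ‖F k x - F k y‖ < c → ‖f x - f y‖ < e := by
  obtain ⟨n, hkn, hn⟩ := exists_radK_lt he k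
  obtain ⟨m, rfl⟩ := Nat.exists_eq_add_of_le hkn
  refine ⟨e / 2 / 1.02 ^ m, by positivity, fun x hx y hy hxy => ?_⟩
  rw [lt_div_iff₀ (by positivity), mul_comm] at hxy
  have h1 := (abs_le.1 (abs_norm_limit_sub_le hb1 hf hx hy (k + m))).2
  have h2 := h.norm_le hb hb1 hx hy k m
  linarith

theorem continuousOn_limit (h : IsApprox S F b) (hb : 0 ≤ b) (hb1 : b ≤ 1 / 100)
    (hf : ∀ x ∈ S, ∀ k, ‖F k x - f x‖ ≤ 10 / 9 * b * radK k) : ContinuousOn f S := by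
  rw [Metric.continuousOn_iff]
  intro x hx e he
  obtain ⟨c, hc, hcf⟩ := h.exists_norm_limit_lt hb hb1 hf 0 he
  refine ⟨c, hc, fun y hy hyx => ?_⟩
  rw [dist_eq_norm] at hyx ⊢
  exact hcf y hy x hx (by rwa [h.zero, h.zero])

end IsApprox

end

section
variable {H : Type*} [NormedAddCommGroup H] [InnerProductSpace ℝ H]

/-- A set whose image under a short map to `ℝ^d` contains a ball has large content. -/
theorem le_hContent_of_closedBall_subset {H : Type*} [NormedAddCommGroup H] {d : ℕ}
    (hd : 1 ≤ d) {A : Set H}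
    {φ : H → EuclideanSpace ℝ (Fin d)} (hφ : LipschitzWith 1 φ) {R : ℝ} (hR : 0 ≤ R)
    (hA : closedBall 0 R ⊆ φ '' A) : ENNReal.ofReal (R ^ d) ≤ hContent d A := by
  refine le_iInf₂ fun t ht => ?_
  set μ : Measure (EuclideanSpace ℝ (Fin d)) := volume
  set V := μ (ball 0 1) with hV
  have hV0 : V ≠ 0 := (measure_ball_pos μ 0 one_pos).ne'
  have hVt : V ≠ ∞ := measure_ball_lt_top.ne
  have hball : ∀ (x : EuclideanSpace ℝ (Fin d)) (ρ : ℝ), 0 ≤ ρ →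
      μ (closedBall x ρ) = ENNReal.ofReal (ρ ^ d) * V := fun x ρ hρ => by
    have := Measure.addHaar_closedBall μ x hρ
    rwa [finrank_euclideanSpace_fin] at this
  have hterm : ∀ n, μ (φ '' t n) ≤ ediam (t n) ^ (d : ℝ) * V := by
    intro n
    rcases (t n).eq_empty_or_nonempty with h0 | ⟨x, hx⟩
    · simp [h0]
    by_cases hdi : ediam (t n) = ∞
    · rw [hdi, ENNReal.top_rpow_of_pos (by exact_mod_cast hd), ENNReal.top_mul hV0]
      exact le_top
    have hsub : φ '' t n ⊆ closedBall (φ x) (ediam (t n)).toReal := by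
      rintro _ ⟨z, hz, rfl⟩
      have h1 : edist (φ z) (φ x) ≤ ediam (t n) := by
        have := hφ z x
        rw [ENNReal.coe_one, one_mul] at this
        exact this.trans (edist_le_ediam_of_mem hz hx)
      rw [mem_closedBall, dist_edist]
      exact ENNReal.toReal_mono hdi h1
    refine (measure_mono hsub).trans (le_of_eq ?_)
    rw [hball _ _ ENNReal.toReal_nonneg, ENNReal.ofReal_pow ENNReal.toReal_nonneg,
      ENNReal.ofReal_toReal hdi, ENNReal.rpow_natCast]
  have hcov : closedBall (0 : EuclideanSpace ℝ (Fin d)) R ⊆ ⋃ n, φ '' t n := by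
    rw [← image_iUnion]
    exact hA.trans (image_mono ht)
  rw [← ENNReal.mul_le_mul_iff_left hV0 hVt, ← hball 0 R hR, ← ENNReal.tsum_mul_right]
  exact (measure_mono hcov).trans ((measure_iUnion_le _).trans (ENNReal.tsum_le_tsum hterm))

theorem hContent_mono {H : Type*} [NormedAddCommGroup H] {d : ℕ} {A B : Set H} (h : A ⊆ B) :
    hContent d A ≤ hContent d B :=
  le_iInf₂ fun t ht => iInf₂_le t (h.trans ht)

/-- Approximate graphs over a disc have large content. -/
theorem IsDProj.le_hContent_image {d : ℕ} (hd : 1 ≤ d) {Q : H →L[ℝ] H} (hQ : IsDProj d Q)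
    {g : H → H} {R : ℝ} (hR : 0 < R) (hg : ContinuousOn g {w | Q w = w ∧ ‖w‖ ≤ R}) (z : H)
    (hgz : ∀ w, Q w = w → ‖w‖ ≤ R → ‖Q (g w - z) - w‖ ≤ R / 2) :
    ENNReal.ofReal ((R / 2) ^ d) ≤ hContent d (g '' {w | Q w = w ∧ ‖w‖ ≤ R}) := by
  obtain ⟨φ, ψ, hφ, hψ, hQψ, hψφ⟩ := hQ.exists_isometry
  refine le_hContent_of_closedBall_subset hd (φ := fun y => φ (y - z)) ?_ (by positivity) ?_
  · refine LipschitzWith.of_dist_le_mul fun x y => ?_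
    rw [dist_eq_norm, dist_eq_norm, ← map_sub, sub_sub_sub_cancel_right, hφ, NNReal.coe_one,
      one_mul]
    exact hQ.norm_apply_le _
  · intro p hp
    rw [mem_closedBall_zero_iff] at hp
    obtain ⟨w, hw, hwR, hwp⟩ := hQ.exists_eq_of_norm_sub_le (g := fun w => g w - z) (p := ψ p) hR
      (hg.sub continuousOn_const) hgz (hQψ p) (by rw [hψ]; linarith)
    refine ⟨g w, ⟨w, ⟨hw, hwR⟩, rfl⟩, ?_⟩
    have h1 : ψ (φ (g w - z) - p) = 0 := by rw [map_sub, hψφ, hwp, sub_self]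
    have h2 := hψ (φ (g w - z) - p)
    rw [h1, norm_zero] at h2
    exact sub_eq_zero.1 (norm_eq_zero.1 h2.symm)

namespace IsApprox
variable {d : ℕ} {S : Set H} {F : ℕ → H → H} {b : ℝ} {f : H → H}

/-- The limit set is Reifenberg flat. -/
theorem exists_dBall_limit_le (hb : 0 ≤ b) (hb1 : b ≤ 1 / 100)
    (hf : ∀ x ∈ S, ∀ k, ‖F k x - f x‖ ≤ 10 / 9 * b * radK k)
    (hG : ∀ k, ∀ y ∈ F k '' S, ∃ R, IsDProj d R ∧ IsGraph (F k '' S) y R b (radK k))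
    {z : H} (hz : z ∈ f '' S) {t : ℝ} (ht : 0 < t) (ht1 : t ≤ 1) :
    ∃ Pl : Set H, IsDPlane d Pl ∧ dBall z t (f '' S) Pl ≤ 60 * b := by
  obtain ⟨x, hx, rfl⟩ := hz
  obtain ⟨k, hk1, hk2⟩ := exists_radK_near ht ht1
  rw [radK_succ] at hk1
  have hr := radK_pos k
  set r := radK k
  obtain ⟨R, hR, hg⟩ := hG k _ ⟨x, hx, rfl⟩
  obtain ⟨Pl, hPl, -, hmem, hdist⟩ := hR.exists_isDPlane (F k x)
  have hbr0 : 0 ≤ b * r := by positivity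
  have hbr : b * r ≤ 1 / 100 * r := mul_le_mul_of_nonneg_right hb1 hr.le
  have hfr : ∀ x ∈ S, ‖F k x - f x‖ ≤ 2 * (b * r) := fun x hx => (hf x hx k).trans (by linarith)
  have hbt : b * r ≤ 10 * (b * t) := by
    have := mul_le_mul_of_nonneg_left hk1.le hb
    linarith
  refine ⟨Pl, hPl, dBall_le ht (by positivity) ?_ ?_⟩
  · rintro _ ⟨x', hx', rfl⟩ hd
    rw [hdist]
    have e1 : F k x' - F k x = (F k x' - f x') + (f x' - f x) - (F k x - f x) := by abel
    have h1 : ‖F k x' - F k x‖ ≤ 2 * r := by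
      rw [e1]
      refine (norm_sub_le _ _).trans ?_
      rw [dist_eq_norm] at hd
      linarith [norm_add_le (F k x' - f x') (f x' - f x), hfr x hx, hfr x' hx']
    have h2 := hg.cone _ ⟨x', hx', rfl⟩ _ ⟨x, hx, rfl⟩ (by rw [dist_eq_norm]; linarith)
      (by rw [dist_self]; positivity)
    have h3 := mul_le_mul_of_nonneg_left h1 hb
    have h4 := hR.norm_sub_apply_le (F k x' - f x')
    have e2 : (f x' - F k x) - R (f x' - F k x) = ((F k x' - F k x) - R (F k x' - F k x)) -
        ((F k x' - f x') - R (F k x' - f x')) := by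
      simp only [map_sub]; abel
    rw [e2]
    refine (norm_sub_le _ _).trans ?_
    linarith [hfr x' hx']
  · intro w hw hd
    have hw' := (hmem w).1 hw
    have h1 : ‖w - F k x‖ ≤ 3 * r := by
      rw [dist_eq_norm] at hd
      have e1 : w - F k x = (w - f x) - (F k x - f x) := by abel
      rw [e1]
      refine (norm_sub_le _ _).trans ?_
      linarith [hfr x hx]
    obtain ⟨_, ⟨x', hx', rfl⟩, hx'd, hx'w⟩ := hg.full _ hw' h1
    have h2 := hg.cone _ ⟨x', hx', rfl⟩ _ ⟨x, hx, rfl⟩ hx'd (by rw [dist_self]; positivity)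
    rw [hx'w] at h2
    rw [dist_eq_norm] at hx'd
    have h3 := mul_le_mul_of_nonneg_left hx'd hb
    refine (infDist_le_dist_of_mem (mem_image_of_mem f hx')).trans ?_
    rw [dist_eq_norm]
    have e : w - f x' = (F k x' - f x') - ((F k x' - F k x) - (w - F k x)) := by abel
    rw [e]
    refine (norm_sub_le _ _).trans ?_
    linarith [hfr x' hx']

/-- The limit set is lower content regular at small scales. -/
theorem le_hContent_limit (h : IsApprox S F b) (hd : 1 ≤ d) (hb : 0 ≤ b) (hb1 : b ≤ 1 / 100)
    (hf : ∀ x ∈ S, ∀ k, ‖F k x - f x‖ ≤ 10 / 9 * b * radK k)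
    (hG : ∀ k, ∀ y ∈ F k '' S, ∃ R, IsDProj d R ∧ IsGraph (F k '' S) y R b (radK k))
    {z : H} (hz : z ∈ f '' S) {t : ℝ} (ht : 0 < t) (ht1 : t ≤ 1) :
    ENNReal.ofReal ((1 / 80) ^ d * t ^ d) ≤ hContent d (f '' S ∩ closedBall z t) := by
  obtain ⟨x, hx, rfl⟩ := hz
  obtain ⟨k, hk1, hk2⟩ := exists_radK_near ht ht1
  have hrt : t / 10 ≤ radK (k + 1) := by rw [radK_succ]; linarith
  have hr := radK_pos (k + 1)
  generalize k + 1 = n at *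
  set r := radK n
  obtain ⟨R, hR, hg⟩ := hG n _ ⟨x, hx, rfl⟩
  obtain ⟨A, -, hA, hAL⟩ := hg.exists_section ⟨x, hx, rfl⟩ hr hb1
  have hbr : b * r ≤ 1 / 100 * r := mul_le_mul_of_nonneg_right hb1 hr.le
  have hfr : ∀ x ∈ S, ‖F n x - f x‖ ≤ 2 / 100 * r := fun x hx =>
    (hf x hx n).trans (by linarith)
  choose! G hGS hGA using fun w hw hwr => (hA w hw hwr).1
  have hwr : ∀ {w : H}, ‖w‖ ≤ r / 4 → ‖w‖ ≤ 3 * r := fun hw => hw.trans (by linarith)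
  have hcont : ContinuousOn (fun w => f (G w)) {w | R w = w ∧ ‖w‖ ≤ r / 4} := by
    rw [Metric.continuousOn_iff]
    rintro w ⟨hw, hwr'⟩ e he
    obtain ⟨c, hc, hcf⟩ := h.exists_norm_limit_lt hb hb1 hf n he
    refine ⟨c / 2, by positivity, ?_⟩
    rintro w' ⟨hw', hwr''⟩ hww
    rw [dist_eq_norm] at hww ⊢
    refine hcf _ (hGS _ hw' (hwr hwr'')) _ (hGS _ hw (hwr hwr')) ?_
    rw [hGA _ hw' (hwr hwr''), hGA _ hw (hwr hwr')]
    have := hAL w' w hw' (hwr hwr'') hw (hwr hwr')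
    linarith [norm_nonneg (w' - w)]
  have hclose : ∀ w, R w = w → ‖w‖ ≤ r / 4 → ‖A w - f (G w)‖ ≤ 2 / 100 * r := fun w hw hwr' => by
    have := hfr _ (hGS w hw (hwr hwr'))
    rwa [hGA w hw (hwr hwr')] at this
  have key := hR.le_hContent_image hd (by positivity : 0 < r / 4) hcont (F n x) fun w hw hwr' => by
    have e : R (f (G w) - F n x) - w = -R (A w - f (G w)) := by
      have h1 := (hA w hw (hwr hwr')).2.1
      rw [map_sub, sub_eq_iff_eq_add] at h1
      simp only [map_sub, h1]
      abel
    rw [e, norm_neg]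
    refine (hR.norm_apply_le _).trans ((hclose w hw hwr').trans ?_)
    linarith
  refine le_trans ?_ (key.trans (hContent_mono ?_))
  · rw [← mul_pow]
    refine ENNReal.ofReal_le_ofReal (pow_le_pow_left₀ (by positivity) ?_ d)
    linarith
  · rintro _ ⟨w, ⟨hw, hwr'⟩, rfl⟩
    refine ⟨⟨_, hGS w hw (hwr hwr'), rfl⟩, ?_⟩
    rw [mem_closedBall, dist_eq_norm]
    have e : f (G w) - f x = (A w - F n x) - (A w - f (G w)) + (F n x - f x) := by abel
    rw [e]
    refine (norm_add_le _ _).trans ?_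
    have := (hA w hw (hwr hwr')).2.2.2
    linarith [norm_sub_le (A w - F n x) (A w - f (G w)), hclose w hw hwr', hfr x hx]

end IsApprox

/-- The points near which all the finite stages pass lie in the limit set. -/
theorem iInter_closure_subset_image {d : ℕ} {S : Set H} {F : ℕ → H → H} {b : ℝ} {f : H → H}
    {X : ℕ → Set H} {Q : H →L[ℝ] H} (hQ : IsDProj d Q) {x₀ : H}
    (hS : ∀ y, y ∈ S ↔ Q (y - x₀) = y - x₀) (hb1 : b ≤ 1 / 100) (h0 : ∀ x, F 0 x = x)
    (hf : ∀ x ∈ S, ∀ k, ‖F k x - f x‖ ≤ 10 / 9 * b * radK k) (hc : ContinuousOn f S)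
    (hn : ∀ k, ∀ p ∈ X k, ∃ y ∈ F k '' S, ‖y - p‖ ≤ radK k) :
    ⋂ K : ℕ, closure (⋃ k, ⋃ (_ : K ≤ k), X k) ⊆ f '' S := by
  intro z hz
  obtain ⟨φ, ψ, hφ, -, -, hψφ⟩ := hQ.exists_isometry
  have hSc : IsClosed S := by
    have : S = {y | Q (y - x₀) = y - x₀} := Set.ext hS
    rw [this]
    exact isClosed_eq (by fun_prop) (by fun_prop)
  have hcomp : IsCompact (S ∩ closedBall z 4) := by
    have hK : IsCompact ((fun v => x₀ + ψ v) '' closedBall (0 : EuclideanSpace ℝ (Fin d))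
        (4 + dist z x₀)) := (isCompact_closedBall _ _).image (by fun_prop)
    refine hK.of_isClosed_subset (hSc.inter isClosed_closedBall) ?_
    rintro y ⟨hy, hyz⟩
    refine ⟨φ (y - x₀), ?_, ?_⟩
    · rw [mem_closedBall_zero_iff, hφ]
      refine (hQ.norm_apply_le _).trans ?_
      rw [← dist_eq_norm]
      rw [mem_closedBall] at hyz
      linarith [dist_triangle y z x₀]
    · simp only [hψφ]
      rw [(hS y).1 hy, add_sub_cancel]
  have hcl : IsClosed (f '' (S ∩ closedBall z 4)) :=
    (hcomp.image_of_continuousOn (hc.mono inter_subset_left)).isClosed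
  suffices z ∈ closure (f '' (S ∩ closedBall z 4)) by
    rw [hcl.closure_eq] at this
    exact image_mono inter_subset_left this
  rw [Metric.mem_closure_iff]
  intro e he
  obtain ⟨K, -, hK⟩ := exists_radK_lt (show 0 < min e 1 / 4 by positivity) 0
  obtain ⟨p, hp, hzp⟩ := Metric.mem_closure_iff.1 (mem_iInter.1 hz K) (min e 1 / 4) (by positivity)
  obtain ⟨k, hk⟩ := mem_iUnion.1 hp
  obtain ⟨hKk, hpk⟩ := mem_iUnion.1 hk
  obtain ⟨_, ⟨x, hx, rfl⟩, hxp⟩ := hn k p hpk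
  have hrk : radK k ≤ radK K := pow_le_pow_of_le_one (by norm_num) (by norm_num) hKk
  have h1 := hf x hx k
  have h2 := hf x hx 0
  rw [h0, radK_zero] at h2
  have h3 := mul_le_mul_of_nonneg_right hb1 (radK_pos k).le
  have h4 := min_le_left e 1
  have h5 := min_le_right e 1
  rw [dist_eq_norm] at hzp
  have hzf : ‖z - f x‖ < min e 1 := by
    have e1 : z - f x = (z - p) - (F k x - p) + (F k x - f x) := by abel
    rw [e1]
    refine (norm_add_le _ _).trans_lt ?_
    linarith [norm_sub_le (z - p) (F k x - p), radK_pos k]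
  refine ⟨f x, ⟨x, ⟨hx, ?_⟩, rfl⟩, by rw [dist_eq_norm]; linarith⟩
  rw [mem_closedBall, dist_eq_norm]
  have e1 : x - z = (x - f x) - (z - f x) := by abel
  rw [e1]
  refine (norm_sub_le _ _).trans ?_
  linarith

/-- The limit set is lower content regular at large scales. -/
theorem IsApprox.le_hContent_limit_of_one_le {d : ℕ} {S : Set H} {F : ℕ → H → H} {b : ℝ}
    {f : H → H} (h : IsApprox S F b) (hd : 1 ≤ d) (hb : 0 ≤ b) (hb1 : b ≤ 1 / 100)
    (hf : ∀ x ∈ S, ∀ k, ‖F k x - f x‖ ≤ 10 / 9 * b * radK k) {Q : H →L[ℝ] H} (hQ : IsDProj d Q)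
    (hS : ∀ p ∈ S, ∀ y, y ∈ S ↔ Q (y - p) = y - p) {z : H} (hz : z ∈ f '' S) {t : ℝ}
    (ht : 1 ≤ t) :
    ENNReal.ofReal ((1 / 80) ^ d * t ^ d) ≤ hContent d (f '' S ∩ closedBall z t) := by
  obtain ⟨x, hx, rfl⟩ := hz
  have hf0 : ∀ x ∈ S, ‖x - f x‖ ≤ 2 / 100 := fun x hx => by
    have := hf x hx 0
    rw [h.zero, radK_zero] at this
    linarith
  have hmem : ∀ w, Q w = w → x + w ∈ S := fun w hw => by
    rw [hS x hx, add_sub_cancel_left, hw]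
  have hcont : ContinuousOn (fun w => f (x + w)) {w | Q w = w ∧ ‖w‖ ≤ t / 2} :=
    (h.continuousOn_limit hb hb1 hf).comp (by fun_prop) fun w hw => hmem w hw.1
  have key := hQ.le_hContent_image hd (by positivity : 0 < t / 2) hcont x fun w hw hwt => by
    have e : Q (f (x + w) - x) - w = -Q (x + w - f (x + w)) := by
      simp only [map_sub, map_add, hw]
      abel
    rw [e, norm_neg]
    refine (hQ.norm_apply_le _).trans ((hf0 _ (hmem w hw)).trans ?_)
    linarith
  refine le_trans ?_ (key.trans (hContent_mono ?_))
  · rw [← mul_pow]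
    refine ENNReal.ofReal_le_ofReal (pow_le_pow_left₀ (by positivity) ?_ d)
    linarith
  · rintro _ ⟨w, ⟨hw, hwt⟩, rfl⟩
    refine ⟨⟨_, hmem w hw, rfl⟩, ?_⟩
    rw [mem_closedBall, dist_eq_norm]
    have e : f (x + w) - f x = w - (x + w - f (x + w)) + (x - f x) := by abel
    rw [e]
    refine (norm_add_le _ _).trans ?_
    linarith [norm_sub_le w (x + w - f (x + w)), hf0 _ (hmem w hw), hf0 x hx]

/-- A plane satisfies the conditions of a stage with respect to a net of planes close to it. -/
theorem IsStage.of_plane {d : ℕ} {S X : Set H} {R : H →L[ℝ] H} {Q : H → H →L[ℝ] H} {δ a b : ℝ}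
    (hδ : 0 ≤ δ) (hδa : 12 * δ ≤ a) (hab : a ≤ b) (hb : b ≤ 1 / 100) (hR : IsDProj d R)
    (hSne : S.Nonempty)
    (hS : ∀ p ∈ S, (∀ y, y ∈ S ↔ R (y - p) = y - p) ∧ ∀ y, infDist y S = ‖(y - p) - R (y - p)‖)
    (hQ : ∀ p ∈ X, IsDProj d (Q p)) (hRQ : ∀ p ∈ X, ‖R - Q p‖ ≤ δ)
    (hX : ∀ p ∈ X, infDist p S ≤ δ) : IsStage d X Q 1 a b S := by
  have hcone : ∀ u ∈ S, ∀ v ∈ S, R (u - v) = u - v := fun u hu v hv => ((hS v hv).1 u).1 hu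
  have hgraph : ∀ y ∈ S, ∀ r, 0 < r → IsGraph S y R 0 r := fun y hy r hr => by
    refine ⟨fun u hu v hv _ _ => ?_, fun w hw hwr => ⟨y + w, ?_, ?_, ?_⟩⟩
    · rw [hcone u hu v hv, sub_self, norm_zero, zero_mul]
    · rw [(hS y hy).1, add_sub_cancel_left, hw]
    · rw [dist_eq_norm, add_sub_cancel_left]
      linarith
    · rw [add_sub_cancel_left, hw]
  refine ⟨fun y hy => ⟨R, hR, (hgraph y hy 1 one_pos).mono (by linarith)⟩, fun y hy p hp hyp => ?_,
    fun y hy p hp hyp => ?_, fun p hp => ?_⟩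
  · have h1 : ‖(y - p) - R (y - p)‖ ≤ δ := by
      have := hX p hp
      have e : (y - p) - R (y - p) = -((p - y) - R (p - y)) := by
        simp only [map_sub]
        abel
      rwa [e, norm_neg, ← (hS y hy).2]
    have h2 : ‖(R - Q p) (y - p)‖ ≤ δ * (11 * 1) :=
      ((R - Q p).le_opNorm _).trans (mul_le_mul (hRQ p hp) hyp (norm_nonneg _) hδ)
    have e : (y - p) - Q p (y - p) = ((y - p) - R (y - p)) + (R - Q p) (y - p) := by
      rw [_root_.sub_apply]
      abel
    rw [e]
    refine (norm_add_le _ _).trans ?_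
    linarith
  · have := (hgraph y hy 10 (by norm_num)).image (σ := fun u => u) (a' := a) hR (hQ p hp)
      ((hRQ p hp).trans (by linarith)) hy (by norm_num) (by norm_num)
      (fun u _ v _ _ _ => by simp only [sub_self, norm_zero]; positivity)
      (fun u _ => by simp only [sub_self, norm_zero]; positivity) fun u hu v hv _ _ => by
        have e : (u - v) - Q p (u - v) = (R - Q p) (u - v) := by
          rw [_root_.sub_apply, hcone u hu v hv]
        rw [e]
        exact (R - Q p).le_of_opNorm_le ((hRQ p hp).trans (by linarith)) _
    rwa [image_id', div_self (by norm_num)] at this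
  · obtain ⟨y, hy⟩ := hSne
    refine ⟨y + R (p - y), ?_, ?_⟩
    · rw [(hS y hy).1, add_sub_cancel_left, hR.idem]
    · have := hX p hp
      rw [(hS y hy).2] at this
      have e : y + R (p - y) - p = -((p - y) - R (p - y)) := by abel
      rw [e, norm_neg]
      linarith

/-- The composition of the first `k` maps `netMap (X i) (Q i) (radK i)`. -/
noncomputable def netSeq (X : ℕ → Set H) (Q : ℕ → H → H →L[ℝ] H) : ℕ → H → H
  | 0, x => x
  | k + 1, x => netMap (X k) (Q k) (radK k) (netSeq X Q k x)

theorem isStage_netSeq {d N : ℕ} {X : ℕ → Set H} {Q : ℕ → H → H →L[ℝ] H} {S : Set H} {δ a b : ℝ}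
    (h0 : IsStage d (X 0) (Q 0) 1 a b S) (hX : ∀ k, IsFlatNet d N (X k) (Q k) (radK k) δ)
    (hn : ∀ k, IsNextNet (X k) (X (k + 1)) (Q k) (Q (k + 1)) (radK k) δ) (hδ : 0 ≤ δ)
    (ha : (52 * N + 160) * δ ≤ a) (hab : (8 * N + 4) * a ≤ b) (hb : b ≤ 1 / 100) (k : ℕ) :
    IsStage d (X k) (Q k) (radK k) a b (netSeq X Q k '' S) := by
  induction k with
  | zero =>
    rw [radK_zero]
    convert h0
    exact image_id' S
  | succ k ih =>
    have := ih.next (hX k) (hX (k + 1)).proj (hn k) (radK_pos k) hδ ha hab hb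
    rwa [image_image, ← radK_succ] at this

theorem isApprox_netSeq {d N : ℕ} {X : ℕ → Set H} {Q : ℕ → H → H →L[ℝ] H} {S : Set H} {δ a b : ℝ}
    (h : ∀ k, IsStage d (X k) (Q k) (radK k) a b (netSeq X Q k '' S))
    (hX : ∀ k, IsFlatNet d N (X k) (Q k) (radK k) δ) (ha : 0 ≤ a) (hab : (8 * N + 4) * a ≤ b) :
    IsApprox S (netSeq X Q) b := by
  have hNa : 0 ≤ N * a := by positivity
  refine ⟨fun x => rfl, fun k x hx => ?_, fun k x hx y hy hxy => ?_⟩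
  · exact ((h k).norm_netMap_sub_le (hX k) (radK_pos k) ha (mem_image_of_mem _ hx)).trans
      (mul_le_mul_of_nonneg_right (by linarith) (radK_pos k).le)
  · refine ((h k).norm_netMap_sub_sub_le (hX k) (radK_pos k) ha (mem_image_of_mem _ hy)
      (mem_image_of_mem _ hx) (mem_image_of_mem _ hy) hxy ?_).trans
      (mul_le_mul_of_nonneg_right (by linarith) (norm_nonneg _))
    rw [sub_self, norm_zero]
    exact (radK_pos k).le

/-- Planes through nearby points which are close in a large ball have close directions, and
the base point of one is close to the other. -/
theorem norm_proj_sub_le_and_of_dBall_le {d : ℕ} {A B : Set H} {Q Q' : H →L[ℝ] H}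
    (hQ : IsDProj d Q) (hQ' : IsDProj d Q')
    (hA : ∀ p ∈ A, (∀ y, y ∈ A ↔ Q (y - p) = y - p) ∧ ∀ y, infDist y A = ‖(y - p) - Q (y - p)‖)
    (hB : ∀ p ∈ B, (∀ y, y ∈ B ↔ Q' (y - p) = y - p) ∧ ∀ y, infDist y B = ‖(y - p) - Q' (y - p)‖)
    {p u : H} (hp : p ∈ A) (hu : u ∈ B) {r ε : ℝ} (hr : 0 < r) (hε : ε ≤ 1 / 3)
    (hpu : ‖p - u‖ ≤ 100 * r) (h : dBall u (10000 * r) A B ≤ ε) :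
    ‖Q' - Q‖ ≤ 6 * ε ∧ ‖(p - u) - Q' (p - u)‖ ≤ 10000 * ε * r := by
  have hr' : 0 < 10000 * r := by positivity
  refine ⟨?_, ?_⟩
  · rw [norm_sub_rev]
    exact norm_proj_sub_le_of_dBall_le hQ hQ' ⟨p, hp⟩ hA hB hu hr' hε h
  · have := infDist_le_of_dBall_le hr' ⟨u, hu⟩ h hp (by rw [dist_eq_norm]; linarith)
    rw [(hB u hu).2] at this
    linarith

end

section
variable {H : Type*} [NormedAddCommGroup H] [InnerProductSpace ℝ H] {d N : ℕ} {ε : ℝ}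
  {P₀ : Set H} {X : ℕ → Set H} {P : ℕ → H → Set H} {Q₀ : H →L[ℝ] H} {Q : ℕ → H → H →L[ℝ] H}

theorem isApprox_netSeq_of_coherent
    (hN : ∀ Q : H →L[ℝ] H, IsDProj d Q → ∀ (q : H) (r : ℝ), 0 < r → ∀ T : Finset H,
      (∀ p ∈ T, ‖p - q‖ ≤ 22 * r) →
      (∀ p ∈ T, ∀ p' ∈ T, p ≠ p' → r / 2 ≤ ‖Q (p - p')‖) → T.card ≤ N)
    (hε : 0 < ε) {b : ℝ} (hεb : (8 * N + 4) * ((52 * N + 160) * (10000 * ε)) = b)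
    (hb : b ≤ 1 / 100) (hQ₀ : IsDProj d Q₀) (hP₀ne : P₀.Nonempty)
    (hP₀ : ∀ p ∈ P₀, (∀ y, y ∈ P₀ ↔ Q₀ (y - p) = y - p) ∧
      ∀ y, infDist y P₀ = ‖(y - p) - Q₀ (y - p)‖)
    (hQ : ∀ k, ∀ p ∈ X k, IsDProj d (Q k p))
    (hP : ∀ k, ∀ p ∈ X k, p ∈ P k p ∧ ∀ p' ∈ P k p, (∀ y, y ∈ P k p ↔ Q k p (y - p') = y - p') ∧
      ∀ y, infDist y (P k p) = ‖(y - p') - Q k p (y - p')‖)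
    (hsep : ∀ k, ∀ p ∈ X k, ∀ q ∈ X k, p ≠ q → radK k ≤ dist p q)
    (hpar : ∀ k : ℕ, 1 ≤ k → ∀ p ∈ X k, ∃ q ∈ X (k - 1), dist p q ≤ 2 * radK (k - 1))
    (hroot : ∀ p ∈ X 0, infDist p P₀ ≤ ε) (hroot' : ∀ p ∈ X 0, dBall p 100 (P 0 p) P₀ ≤ ε)
    (hcoh : ∀ k l : ℕ, l ≤ k + 2 → k ≤ l + 2 →
      ∀ x ∈ X k, ∀ p ∈ X k, ∀ u ∈ X l,
        dist x p ≤ 100 * radK k → dist x u ≤ 100 * radK l →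
        dBall u (10000 * radK l) (P k p) (P l u) < ε) :
    IsApprox P₀ (netSeq X Q) b ∧
      (∀ k, ∀ y ∈ netSeq X Q k '' P₀,
        ∃ R, IsDProj d R ∧ IsGraph (netSeq X Q k '' P₀) y R b (radK k)) ∧
      ∀ k, ∀ p ∈ X k, ∃ y ∈ netSeq X Q k '' P₀, ‖y - p‖ ≤ radK k := by
  set δ := 10000 * ε with hδ
  set a := (52 * N + 160) * δ with ha
  have hδ0 : 0 < δ := by positivity
  have hNδ : 0 ≤ N * δ := by positivity
  have ha0 : 0 < a := by positivity
  have hNa : 0 ≤ N * a := by positivity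
  have hεδ : 6 * ε ≤ δ := by linarith
  have hε3 : ε ≤ 1 / 3 := by linarith
  have hclose : ∀ k l : ℕ, l ≤ k + 2 → k ≤ l + 2 → ∀ p ∈ X l, ∀ q ∈ X k,
      ‖q - p‖ ≤ 100 * radK l →
        ‖Q l p - Q k q‖ ≤ δ ∧ ‖(q - p) - Q l p (q - p)‖ ≤ δ * radK l := by
    intro k l hlk hkl p hp q hq hqp
    have hd := hcoh k l hlk hkl q hq q hq p hp
      (by rw [dist_self]; have := radK_pos k; positivity) (by rwa [dist_eq_norm])
    obtain ⟨h1, h2⟩ := norm_proj_sub_le_and_of_dBall_le (hQ k q hq) (hQ l p hp) (hP k q hq).2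
      (hP l p hp).2 (hP k q hq).1 (hP l p hp).1 (radK_pos l) hε3 hqp hd.le
    exact ⟨h1.trans hεδ, h2⟩
  have hnet : ∀ k, IsFlatNet d N (X k) (Q k) (radK k) δ := fun k => by
    have h := hclose k k (by omega) (by omega)
    refine ⟨hQ k, exists_finset_of_flat hN (radK_pos k) (by linarith) (hQ k) ?_
      fun p hp q hq hqp => (h p hp q hq hqp).2, fun p hp q hq hqp => (h p hp q hq hqp).1,
      fun p hp q hq hqp => (h p hp q hq hqp).2⟩
    simpa only [dist_eq_norm] using hsep k
  have hnext : ∀ k, IsNextNet (X k) (X (k + 1)) (Q k) (Q (k + 1)) (radK k) δ := fun k => by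
    have h := hclose (k + 1) k (by omega) (by omega)
    refine ⟨?_, fun p hp q hq hqp => (h p hp q hq hqp).1,
      fun p hp q hq hqp => (h p hp q hq hqp).2⟩
    simpa only [dist_eq_norm, Nat.add_sub_cancel] using hpar (k + 1) (by omega)
  have hstage0 : IsStage d (X 0) (Q 0) 1 a b P₀ := by
    refine IsStage.of_plane hδ0.le (by linarith) (by linarith) hb hQ₀ hP₀ne hP₀ (hQ 0)
      (fun p hp => ?_) fun p hp => (hroot p hp).trans (by linarith)
    exact (norm_proj_sub_le_of_dBall_le hQ₀ (hQ 0 p hp) hP₀ne hP₀ (hP 0 p hp).2 (hP 0 p hp).1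
      (by norm_num) hε3 (dBall_comm p 100 _ _ ▸ hroot' p hp)).trans hεδ
  have hstage := isStage_netSeq hstage0 hnet hnext hδ0.le le_rfl hεb.le hb
  exact ⟨isApprox_netSeq hstage hnet ha0.le hεb.le, fun k => (hstage k).graph,
    fun k => (hstage k).near⟩

end

/-- **Theorem 3.8 (Reifenberg parametrization in Hilbert space, after David–Toro).** Given a
coherent collection of balls and planes satisfying the CCBP conditions with parameter `ε`
small enough (depending only on `d`), there exist `τ ∈ (0,1)` and an injective continuous
map `f : P₀ → H` such that `f` moves points at most `Cε`, is bi-Hölder, its image `Σ`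
contains the accumulation set `E_∞`, is `Cε`-Reifenberg flat, and is lower content
`d`-regular. -/
theorem reifenberg_parametrization
    {H : Type*} [NormedAddCommGroup H] [InnerProductSpace ℝ H]
    [CompleteSpace H] [TopologicalSpace.SeparableSpace H]
    (d : ℕ) (hd : 1 ≤ d) (hdim : (d : Cardinal) < Module.rank ℝ H) :
    ∃ ε₀ C c : ℝ, 0 < ε₀ ∧ 0 < C ∧ 0 < c ∧
      ∀ ε : ℝ, 0 < ε → ε < ε₀ →
      ∀ (P₀ : Set H) (X : ℕ → Set H) (P : ℕ → H → Set H),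
        IsDPlane d P₀ →
        -- separation of the net points at scale `k`
        (∀ k, ∀ p ∈ X k, ∀ q ∈ X k, p ≠ q → radK k ≤ dist p q) →
        -- `P_{j,k}` is a `d`-plane through `x_{j,k}`
        (∀ k, ∀ p ∈ X k, IsDPlane d (P k p) ∧ p ∈ P k p) →
        -- (a) `x_{j,k} ∈ V²_{k-1}`
        (∀ k : ℕ, 1 ≤ k → ∀ p ∈ X k, ∃ q ∈ X (k - 1), dist p q ≤ 2 * radK (k - 1)) →
        -- (b) `dist(x_{j,0}, P₀) ≤ ε`
        (∀ p ∈ X 0, infDist p P₀ ≤ ε) →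
        -- (c) `d_{x_{j,0},100}(P_{j,0}, P₀) ≤ ε`
        (∀ p ∈ X 0, dBall p 100 (P 0 p) P₀ ≤ ε) →
        -- (d) `ε_k(x_{j,k}) < ε`
        (∀ k l : ℕ, l ≤ k + 2 → k ≤ l + 2 →
          ∀ x ∈ X k, ∀ p ∈ X k, ∀ u ∈ X l,
            dist x p ≤ 100 * radK k → dist x u ≤ 100 * radK l →
            dBall u (10000 * radK l) (P k p) (P l u) < ε) →
        ∃ (τ : ℝ) (f : H → H), 0 < τ ∧ τ < 1 ∧
          ContinuousOn f P₀ ∧ Set.InjOn f P₀ ∧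
          -- (1) `|f(x) − x| ≤ Cε`
          (∀ x ∈ P₀, dist (f x) x ≤ C * ε) ∧
          -- (2) bi-Hölder estimates
          (∀ x ∈ P₀, ∀ y ∈ P₀, dist x y ≤ 1 →
            (1 / 4) * dist x y ^ (1 + τ) ≤ dist (f x) (f y) ∧
              dist (f x) (f y) ≤ 10 * dist x y ^ (1 - τ)) ∧
          -- (3) `E_∞ ⊆ Σ = f(P₀)`
          (⋂ K : ℕ, closure (⋃ k, ⋃ (_ : K ≤ k), X k)) ⊆ f '' P₀ ∧
          -- (4) `Σ` is `Cε`-Reifenberg flat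
          (∀ z ∈ f '' P₀, ∀ t : ℝ, 0 < t → t < 1 →
            ∃ Pl : Set H, IsDPlane d Pl ∧ dBall z t (f '' P₀) Pl ≤ C * ε) ∧
          -- (5) lower content regularity of `Σ`
          (∀ x ∈ f '' P₀, ∀ r : ℝ, 0 < r →
            ENNReal.ofReal (c * r ^ d) ≤ hContent d ((f '' P₀) ∩ closedBall x r)) := by
  obtain ⟨N, hN⟩ := exists_card_le_of_separated (H := H) d
  obtain ⟨K, hK⟩ : ∃ K : ℝ, K = (8 * N + 4) * ((52 * N + 160) * 10000) := ⟨_, rfl⟩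
  have hK0 : 0 < K := by rw [hK]; positivity
  refine ⟨1 / (100 * K), 60 * K, (1 / 80) ^ d, by positivity, by positivity, by positivity,
    fun ε hε hε₀ P₀ X P hP₀ hsep hP hpar hroot hroot' hcoh => ?_⟩
  rw [lt_div_iff₀ (by positivity)] at hε₀
  obtain ⟨Q₀, hQ₀, hP₀ne, hP₀'⟩ := hP₀.exists_isDProj hd
  choose! Q hQ hPne hQP using fun k p (hp : p ∈ X k) => (hP k p hp).1.exists_isDProj hd
  have hb0 : 0 ≤ K * ε := by positivity
  have hb1 : K * ε ≤ 1 / 100 := by linarith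
  obtain ⟨hF, hG, hn⟩ := isApprox_netSeq_of_coherent hN hε (b := K * ε) (by rw [hK]; ring) hb1
    hQ₀ hP₀ne hP₀' hQ (fun k p hp => ⟨(hP k p hp).2, hQP k p hp⟩) hsep hpar hroot hroot' hcoh
  obtain ⟨f, hf⟩ := hF.exists_limit
  have hc := hF.continuousOn_limit hb0 hb1 hf
  obtain ⟨x₀, hx₀⟩ := hP₀ne
  refine ⟨1 / 2, f, by norm_num, by norm_num, hc, hF.injOn_limit hb0 hb1 hf, fun x hx => ?_,
    fun x hx y hy hxy => ⟨?_, ?_⟩,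
    iInter_closure_subset_image hQ₀ (hP₀' x₀ hx₀).1 hb1 hF.zero hf hc hn,
    fun z hz t ht ht1 => ?_, fun z hz t ht => ?_⟩
  · have := hf x hx 0
    rw [hF.zero, radK_zero] at this
    rw [dist_comm, dist_eq_norm]
    linarith
  · rw [dist_eq_norm, dist_eq_norm,
      Real.rpow_add_of_nonneg (norm_nonneg _) zero_le_one (by norm_num), Real.rpow_one,
      ← Real.sqrt_eq_rpow]
    exact hF.mul_sqrt_le_norm_limit hb0 hb1 hf hx hy (by rwa [← dist_eq_norm])
  · rw [dist_eq_norm, dist_eq_norm, show (1 : ℝ) - 1 / 2 = 1 / 2 by norm_num,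
      ← Real.sqrt_eq_rpow]
    exact hF.norm_limit_le_sqrt hb0 hb1 hf hx hy (by rwa [← dist_eq_norm])
  · rw [mul_assoc]
    exact IsApprox.exists_dBall_limit_le hb0 hb1 hf hG hz ht ht1.le
  · rcases le_total t 1 with ht1 | ht1
    · exact hF.le_hContent_limit hd hb0 hb1 hf hG hz ht ht1
    · exact hF.le_hContent_limit_of_one_le hd hb0 hb1 hf hQ₀ (fun p hp => (hP₀' p hp).1) hz ht1
end

section
/- Let H be a real separable Hilbert space, d ≥ 1, A ⊆ ℝ^d a compact set and f : A → H an L-bi-Lipschitz map. Then there exist an integer m and a constant M, both depending only on d and L, and an M-bi-Lipschitz map g : ℝ^d → H × ℝ^m such that g(x) = (f(x), 0) for all x ∈ A. -/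
open Metric Set MeasureTheory
open scoped ENNReal NNReal Classical

section Kirszbraun

variable {E F : Type*} [NormedAddCommGroup E] [InnerProductSpace ℝ E]
  [NormedAddCommGroup F] [InnerProductSpace ℝ F]

/-- The parallel axis theorem, with the variance written in terms of pairwise distances. -/
theorem sum_mul_norm_sub_sq {ι : Type*} [Fintype ι] (w : ι → ℝ) (hw : ∑ i, w i = 1)
    (z : ι → E) (c : E) :
    ∑ i, w i * ‖c - z i‖ ^ 2 =
      ‖c - ∑ i, w i • z i‖ ^ 2 + (∑ i, ∑ j, w i * w j * ‖z i - z j‖ ^ 2) / 2 := by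
  have hcenter : ∑ i, w i * ‖c - z i‖ ^ 2 =
      ‖c‖ ^ 2 - 2 * inner ℝ c (∑ i, w i • z i) + ∑ i, w i * ‖z i‖ ^ 2 := by
    simp only [norm_sub_sq_real, inner_sum, real_inner_smul_right, Finset.mul_sum]
    have hc : ‖c‖ ^ 2 = ∑ i, w i * ‖c‖ ^ 2 := by rw [← Finset.sum_mul, hw, one_mul]
    nth_rewrite 2 [hc]
    rw [← Finset.sum_sub_distrib, ← Finset.sum_add_distrib]
    exact Finset.sum_congr rfl fun i _ => by ring
  have hmean : ‖∑ i, w i • z i‖ ^ 2 = ∑ i, ∑ j, w i * w j * inner ℝ (z i) (z j) := by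
    rw [← real_inner_self_eq_norm_sq, sum_inner]
    simp only [inner_sum, real_inner_smul_left, real_inner_smul_right]
    exact Finset.sum_congr rfl fun i _ => Finset.sum_congr rfl fun j _ => by ring
  have hpairs : ∑ i, ∑ j, w i * w j * ‖z i - z j‖ ^ 2 =
      2 * ∑ i, w i * ‖z i‖ ^ 2 - 2 * ‖∑ i, w i • z i‖ ^ 2 := by
    have h₁ : ∑ i, ∑ j, w i * w j * ‖z i‖ ^ 2 = ∑ i, w i * ‖z i‖ ^ 2 := by
      refine Finset.sum_congr rfl fun i _ => ?_
      simp only [mul_right_comm _ _ (‖z i‖ ^ 2)]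
      rw [← Finset.mul_sum, hw, mul_one]
    have h₂ : ∑ i, ∑ j, w i * w j * ‖z j‖ ^ 2 = ∑ i, w i * ‖z i‖ ^ 2 := by
      rw [Finset.sum_comm, ← h₁]
      exact Finset.sum_congr rfl fun i _ => Finset.sum_congr rfl fun j _ => by ring
    rw [hmean, two_mul (∑ i, w i * ‖z i‖ ^ 2)]
    nth_rewrite 1 [← h₁]
    rw [← h₂, Finset.mul_sum, ← Finset.sum_add_distrib, ← Finset.sum_sub_distrib]
    refine Finset.sum_congr rfl fun i _ => ?_
    rw [Finset.mul_sum, ← Finset.sum_add_distrib, ← Finset.sum_sub_distrib]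
    refine Finset.sum_congr rfl fun j _ => ?_
    rw [norm_sub_sq_real]
    ring
  rw [hcenter, hpairs, norm_sub_sq_real]
  ring

/-- Extending a `K`-Lipschitz map from a finite set of points to one more point. -/
theorem exists_forall_dist_le_of_fintype {ι : Type*} [Fintype ι] {K : ℝ} (hK : 0 ≤ K)
    {x : ι → E} {y : ι → F} (hxy : ∀ i j, dist (y i) (y j) ≤ K * dist (x i) (x j)) (c : E) :
    ∃ p : F, ∀ i, dist p (y i) ≤ K * dist c (x i) := by
  rcases isEmpty_or_nonempty ι with _ | _
  · exact ⟨0, isEmptyElim⟩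
  have hconvex (w : ι → ℝ) (hw : w ∈ stdSimplex ℝ ι) :
      ConvexOn ℝ univ fun p : F => ∑ i, w i * (‖p - y i‖ ^ 2 - (K * ‖c - x i‖) ^ 2) := by
    have hterm (i : ι) : ConvexOn ℝ univ
        fun p : F => w i * (‖p - y i‖ ^ 2 - (K * ‖c - x i‖) ^ 2) := by
      have hnorm : ConvexOn ℝ univ fun p : F => ‖p - y i‖ := by
        simpa [dist_eq_norm] using convexOn_dist (y i) (convex_univ (𝕜 := ℝ) (E := F))
      simpa [sub_eq_add_neg] using
        ((hnorm.pow (fun p _ => norm_nonneg _) 2).add_const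
          (-(K * ‖c - x i‖) ^ 2)).smul (hw.1 i)
    have hsum := Finset.sum_induction
      (fun i => fun p : F => w i * (‖p - y i‖ ^ 2 - (K * ‖c - x i‖) ^ 2))
      (ConvexOn ℝ univ) (fun _ _ h₁ h₂ => h₁.add h₂) (convexOn_const 0 convex_univ)
      (s := Finset.univ) fun i _ => hterm i
    convert! hsum using 1
    ext p
    simp
  have hconcave (p : F) : ConcaveOn ℝ (stdSimplex ℝ ι)
      fun w => ∑ i, w i * (‖p - y i‖ ^ 2 - (K * ‖c - x i‖) ^ 2) := by
    refine ⟨convex_stdSimplex ℝ ι, fun v _ w _ a b _ _ _ => le_of_eq ?_⟩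
    simp only [smul_eq_mul, Finset.mul_sum, ← Finset.sum_add_distrib, Pi.add_apply,
      Pi.smul_apply]
    exact Finset.sum_congr rfl fun i _ => by ring
  obtain ⟨p, -, w, hw, hsaddle⟩ := Sion.exists_isSaddlePointOn
    (X := convexHull ℝ (range y)) (Y := stdSimplex ℝ ι)
    (f := fun p w => ∑ i, w i * (‖p - y i‖ ^ 2 - (K * ‖c - x i‖) ^ 2))
    (range_nonempty y).convexHull (convex_convexHull ℝ _)
    ((finite_range y).isCompact_convexHull ℝ)
    (fun w _ => (by fun_prop : Continuous _).lowerSemicontinuous.lowerSemicontinuousOn _)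
    (fun w hw => ((hconvex w hw).subset (subset_univ _) (convex_convexHull ℝ _)).quasiconvexOn)
    (convex_stdSimplex ℝ ι) ⟨_, single_mem_stdSimplex ℝ (Classical.arbitrary ι)⟩
    (isCompact_stdSimplex ℝ ι)
    (fun p _ => (by fun_prop : Continuous _).upperSemicontinuous.upperSemicontinuousOn _)
    (fun p _ => (hconcave p).quasiconcaveOn)
  have hmean : ∑ i, w i • y i ∈ convexHull ℝ (range y) :=
    (convex_convexHull ℝ _).sum_mem (fun i _ => hw.1 i) hw.2
      fun i _ => subset_convexHull ℝ _ (mem_range_self i)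
  have hvalue : ∑ i, w i * (‖∑ i, w i • y i - y i‖ ^ 2 - (K * ‖c - x i‖) ^ 2) ≤ 0 := by
    have hy := sum_mul_norm_sub_sq w hw.2 y (∑ i, w i • y i)
    have hx := sum_mul_norm_sub_sq w hw.2 x c
    have hle : ∑ i, ∑ j, w i * w j * ‖y i - y j‖ ^ 2 ≤
        K ^ 2 * ∑ i, ∑ j, w i * w j * ‖x i - x j‖ ^ 2 := by
      simp only [Finset.mul_sum]
      refine Finset.sum_le_sum fun i _ => Finset.sum_le_sum fun j _ => ?_
      have hij := pow_le_pow_left₀ dist_nonneg (hxy i j) 2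
      rw [dist_eq_norm, dist_eq_norm, mul_pow] at hij
      linarith [mul_le_mul_of_nonneg_left hij (mul_nonneg (hw.1 i) (hw.1 j))]
    have hsplit : ∑ i, w i * (‖∑ i, w i • y i - y i‖ ^ 2 - (K * ‖c - x i‖) ^ 2) =
        ∑ i, w i * ‖∑ i, w i • y i - y i‖ ^ 2 - K ^ 2 * ∑ i, w i * ‖c - x i‖ ^ 2 := by
      rw [Finset.mul_sum, ← Finset.sum_sub_distrib]
      exact Finset.sum_congr rfl fun i _ => by ring
    rw [hsplit, hy, hx, sub_self, norm_zero]
    nlinarith [mul_nonneg (sq_nonneg K) (sq_nonneg ‖c - ∑ i, w i • x i‖)]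
  refine ⟨p, fun i => ?_⟩
  have hi := (hsaddle _ hmean _ (single_mem_stdSimplex ℝ i)).trans hvalue
  simp only [Pi.single_apply, ite_mul, one_mul, zero_mul, Finset.sum_ite_eq',
    Finset.mem_univ, if_true, sub_nonpos] at hi
  rw [dist_eq_norm, dist_eq_norm]
  exact le_of_sq_le_sq hi (by positivity)

/-- In a Hilbert space, a family of closed balls any finitely many of which have a common point
has a common point. -/
theorem exists_forall_dist_le_of_finite [CompleteSpace F] {ι : Type*} (y : ι → F) (r : ι → ℝ)
    (h : ∀ s : Finset ι, ∃ p : F, ∀ i ∈ s, dist p (y i) ≤ r i) :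
    ∃ p : F, ∀ i, dist p (y i) ≤ r i := by
  rcases isEmpty_or_nonempty ι with _ | ⟨⟨i₀⟩⟩
  · exact ⟨0, isEmptyElim⟩
  let e := InnerProductSpace.toDual ℝ F
  let ball (i : ι) : Set (WeakDual ℝ F) := WeakDual.toStrongDual ⁻¹' closedBall (e (y i)) (r i)
  have hball (p : F) (i : ι) :
      StrongDual.toWeakDual (e p) ∈ ball i ↔ dist p (y i) ≤ r i := by
    simp [ball, e.dist_map]
  obtain ⟨q, -, hq⟩ := (WeakDual.isCompact_closedBall (e (y i₀)) (r i₀)).inter_iInter_nonempty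
    ball (fun i => WeakDual.isClosed_closedBall _ _) fun s => by
      obtain ⟨p, hp⟩ := h (insert i₀ s)
      exact ⟨StrongDual.toWeakDual (e p), (hball p i₀).2 (hp i₀ (by simp)),
        mem_iInter₂.2 fun i hi => (hball p i).2 (hp i (by simp [hi]))⟩
  refine ⟨e.symm (WeakDual.toStrongDual q), fun i => ?_⟩
  rw [← hball, e.apply_symm_apply]
  exact mem_iInter.1 hq i

/-- **Kirszbraun's theorem**: a `K`-Lipschitz relation from an inner product space to a Hilbert
space extends to an everywhere defined `K`-Lipschitz map. -/
theorem exists_lipschitz_extension [CompleteSpace F] {K : ℝ} (hK : 0 ≤ K) {S : Set (E × F)}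
    (hS : ∀ p ∈ S, ∀ q ∈ S, dist p.2 q.2 ≤ K * dist p.1 q.1) :
    ∃ g : E → F, (∀ x y, dist (g x) (g y) ≤ K * dist x y) ∧ ∀ p ∈ S, g p.1 = p.2 := by
  obtain ⟨T, hST, hT, hmax⟩ := zorn_subset_nonempty
    {T : Set (E × F) | ∀ p ∈ T, ∀ q ∈ T, dist p.2 q.2 ≤ K * dist p.1 q.1}
    (fun C hC hchain _ => ⟨⋃₀ C, by
      rintro p ⟨U, hU, hp⟩ q ⟨V, hV, hq⟩
      rcases hchain.total hU hV with hUV | hVU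
      · exact hC hV p (hUV hp) q hq
      · exact hC hU p hp q (hVU hq), fun _ => subset_sUnion_of_mem⟩) S hS
  have htotal (x : E) : ∃ y, (x, y) ∈ T := by
    obtain ⟨y, hy⟩ := exists_forall_dist_le_of_finite (fun p : T => p.1.2)
      (fun p : T => K * dist x p.1.1) fun s => by
        obtain ⟨y, hy⟩ := exists_forall_dist_le_of_fintype hK
          (x := fun p : s => p.1.1.1) (y := fun p : s => p.1.1.2)
          (fun p q => hT _ p.1.2 _ q.1.2) x
        exact ⟨y, fun p hp => hy ⟨p, hp⟩⟩
    refine ⟨y, hmax (y := insert (x, y) T) ?_ (subset_insert _ _) (mem_insert _ _)⟩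
    rintro p (rfl | hp) q (rfl | hq)
    · simp
    · exact hy ⟨q, hq⟩
    · rw [dist_comm p.2, dist_comm p.1]
      exact hy ⟨p, hp⟩
    · exact hT p hp q hq
  choose g hg using htotal
  refine ⟨g, fun x y => hT _ (hg x) _ (hg y), fun p hp => dist_le_zero.1 ?_⟩
  simpa using hT _ (hg p.1) _ (hST hp)

end Kirszbraun

/-- **Lemma 7.3 (bi-Lipschitz extension, after David–Semmes).** Let `A ⊆ ℝ^d` be compact
and `f : A → H` an `L`-bi-Lipschitz map. Then there are an integer `m` and a constant `M`,
depending only on `d` and `L`, and an `M`-bi-Lipschitz map `g : ℝ^d → H × ℝ^m` (with the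
product Hilbert norm) with `g(x) = (f(x), 0)` for all `x ∈ A`. -/
theorem bilipschitz_extension
    {H : Type*} [NormedAddCommGroup H] [InnerProductSpace ℝ H]
    [CompleteSpace H] [TopologicalSpace.SeparableSpace H]
    (d : ℕ) (hd : 1 ≤ d) (L : ℝ) (hL : 1 ≤ L) :
    ∃ (m : ℕ) (M : ℝ), 1 ≤ M ∧
      ∀ (A : Set (EuclideanSpace ℝ (Fin d))) (f : EuclideanSpace ℝ (Fin d) → H),
        IsCompact A →
        (∀ x ∈ A, ∀ y ∈ A,
          dist x y / L ≤ dist (f x) (f y) ∧ dist (f x) (f y) ≤ L * dist x y) →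
        ∃ g : EuclideanSpace ℝ (Fin d) → WithLp 2 (H × EuclideanSpace ℝ (Fin m)),
          (∀ x y, dist x y / M ≤ dist (g x) (g y) ∧ dist (g x) (g y) ≤ M * dist x y) ∧
          ∀ x ∈ A, g x = (WithLp.equiv 2 (H × EuclideanSpace ℝ (Fin m))).symm (f x, 0) := by
  have hL0 : 0 < L := by linarith
  refine ⟨d, 1 + L + L ^ 2, by nlinarith, fun A f _ hf => ?_⟩
  obtain ⟨F, hF, hFf⟩ := exists_lipschitz_extension hL0.le (S := (fun x => (x, f x)) '' A) (by
    rintro _ ⟨x, hx, rfl⟩ _ ⟨y, hy, rfl⟩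
    exact (hf x hx y hy).2)
  obtain ⟨G, hG, hGf⟩ := exists_lipschitz_extension hL0.le (S := (fun x => (f x, x)) '' A) (by
    rintro _ ⟨x, hx, rfl⟩ _ ⟨y, hy, rfl⟩
    rw [← div_le_iff₀' hL0]
    exact (hf x hx y hy).1)
  rw [forall_mem_image] at hFf hGf
  refine ⟨fun x => WithLp.toLp 2 (F x, x - G (F x)), fun x y => ?_, fun x hx => ?_⟩
  · have hdist : dist (WithLp.toLp 2 (F x, x - G (F x))) (WithLp.toLp 2 (F y, y - G (F y))) =
        √(dist (F x) (F y) ^ 2 + dist (x - G (F x)) (y - G (F y)) ^ 2) :=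
      WithLp.prod_dist_eq_of_L2 _ _
    have hfst := hF x y
    have hGF := hG (F x) (F y)
    have hsnd : dist (x - G (F x)) (y - G (F y)) ≤ dist x y + dist (G (F x)) (G (F y)) :=
      dist_sub_sub_le _ _ _ _
    have hxy : dist x y ≤ dist (x - G (F x)) (y - G (F y)) + dist (G (F x)) (G (F y)) := by
      simpa using dist_add_add_le (x - G (F x)) (G (F x)) (y - G (F y)) (G (F y))
    set a := dist (F x) (F y)
    set b := dist (x - G (F x)) (y - G (F y))
    have ha : 0 ≤ a := dist_nonneg
    have hb : 0 ≤ b := dist_nonneg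
    rw [hdist]
    have ha' : a ≤ √(a ^ 2 + b ^ 2) := Real.le_sqrt_of_sq_le (by nlinarith)
    have hb' : b ≤ √(a ^ 2 + b ^ 2) := Real.le_sqrt_of_sq_le (by nlinarith)
    have hab : √(a ^ 2 + b ^ 2) ≤ a + b := Real.sqrt_le_iff.2 ⟨by positivity, by nlinarith⟩
    constructor
    · rw [div_le_iff₀ (by positivity)]
      nlinarith [mul_nonneg (sq_nonneg L) (ha.trans ha'), mul_le_mul_of_nonneg_left ha' hL0.le]
    · nlinarith [mul_le_mul_of_nonneg_left hfst hL0.le]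
  · have hFx : F x = f x := hFf hx
    have hGx : G (f x) = x := hGf hx
    simp [hFx, hGx]
end
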